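/- Let 𝔽_{4,3} denote the 4-graph with vertex set {1,…,7} and edge set {1234, 1235, 1236, 1237, 4567}. There exist constants N_0 and c > 0 such that for all integers n ≥ N_0 and all integers t with 0 ≤ t ≤ c·n, one has EX(n,(t+1)𝔽_{4,3}) ⊆ K_t^4 ⋈ { B_4^{odd}(n−t, m) : 0 ≤ m ≤ √(4(n−t)) }. -/

import Mathlib

open Filter

namespace DensityCH

/-- An `r`-uniform hypergraph with vertices in `ℕ`:
a finite vertex set together with a set of `r`-element edges. -/
structure HGraph (r : ℕ) where
  verts : Finset ℕ
  edges : Finset (Finset ℕ)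
  edges_sub : ∀ e ∈ edges, e ⊆ verts
  edges_card : ∀ e ∈ edges, e.card = r

namespace HGraph

/-- Build an `r`-graph from a vertex set and a set of candidate edges,
keeping exactly the well-formed candidates. -/
def ofEdges (r : ℕ) (V : Finset ℕ) (E : Finset (Finset ℕ)) : HGraph r where
  verts := V
  edges := E.filter fun e => e ⊆ V ∧ e.card = r
  edges_sub := fun e he => ((Finset.mem_filter.mp he).2).1
  edges_card := fun e he => ((Finset.mem_filter.mp he).2).2

variable {r : ℕ}

/-- `H` contains a copy of `F`, i.e. a subgraph isomorphic to `F`. -/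
def IsCopyIn (F H : HGraph r) : Prop :=
  ∃ f : ℕ → ℕ, Set.InjOn f ↑F.verts ∧ (∀ v ∈ F.verts, f v ∈ H.verts) ∧
    ∀ e ∈ F.edges, e.image f ∈ H.edges

/-- The subgraph of `H` induced on `S`. -/
def induce (H : HGraph r) (S : Finset ℕ) : HGraph r :=
  ofEdges r (H.verts ∩ S) (H.edges.filter fun e => e ⊆ S)

/-- Delete a vertex from `H`. -/
def deleteVert (H : HGraph r) (v : ℕ) : HGraph r :=
  ofEdges r (H.verts.erase v) (H.edges.filter fun e => v ∉ e)

/-- The degree of a vertex. -/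
def deg (H : HGraph r) (v : ℕ) : ℕ := (H.edges.filter fun e => v ∈ e).card

/-- The maximum degree `Δ(H)`. -/
def maxDeg (H : HGraph r) : ℕ := H.verts.sup H.deg

/-- The minimum degree `δ(H)`. -/
def minDeg (H : HGraph r) : ℕ :=
  if h : H.verts.Nonempty then H.verts.inf' h H.deg else 0

/-- The average degree `d(H) = r·|E(H)|/|V(H)|`. -/
noncomputable def avgDeg (H : HGraph r) : ℝ :=
  (r : ℝ) * (H.edges.card : ℝ) / (H.verts.card : ℝ)

/-- `H` contains `k` pairwise vertex-disjoint copies of `F`, i.e. `ν(F,H) ≥ k`. -/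
def HasMatching (F H : HGraph r) (k : ℕ) : Prop :=
  ∃ S : Fin k → Finset ℕ,
    (∀ i, S i ⊆ H.verts ∧ (S i).card = F.verts.card) ∧
    (∀ i j, i ≠ j → Disjoint (S i) (S j)) ∧
    ∀ i, F.IsCopyIn (H.induce (S i))

/-- Isomorphism of hypergraphs. -/
def Iso (G H : HGraph r) : Prop :=
  ∃ f : ℕ → ℕ, Set.BijOn f ↑G.verts ↑H.verts ∧
    ∀ e ∈ Finset.powersetCard r G.verts, (e ∈ G.edges ↔ e.image f ∈ H.edges)

/-- The join `G ⋈ H`: all edges of `G`, all edges of `H`, and all `r`-sets meeting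
both vertex sets. -/
def join (G H : HGraph r) : HGraph r :=
  ofEdges r (G.verts ∪ H.verts)
    (G.edges ∪ H.edges ∪ ((Finset.powersetCard r (G.verts ∪ H.verts)).filter
      fun e => (e ∩ G.verts).Nonempty ∧ (e ∩ H.verts).Nonempty))

end HGraph

/-- The complete `r`-graph on a vertex set `S`. -/
def completeOn (r : ℕ) (S : Finset ℕ) : HGraph r :=
  HGraph.ofEdges r S (Finset.powersetCard r S)

/-- The `r`-graph on `V` with no edges. -/
def emptyOn (r : ℕ) (V : Finset ℕ) : HGraph r := HGraph.ofEdges r V ∅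

/-- The Turán number `ex(n,F)`. -/
noncomputable def exN (r n : ℕ) (F : HGraph r) : ℕ :=
  sSup {m | ∃ H : HGraph r, H.verts.card = n ∧ ¬ F.IsCopyIn H ∧ H.edges.card = m}

/-- `d(n,F) = r·ex(n,F)/n`. -/
noncomputable def dN (r n : ℕ) (F : HGraph r) : ℝ := (r : ℝ) * (exN r n F : ℝ) / (n : ℝ)

/-- `δ(n,F) = ex(n,F) − ex(n−1,F)` (as a real number). -/
noncomputable def deltaN (r n : ℕ) (F : HGraph r) : ℝ := (exN r n F : ℝ) - (exN r (n-1) F : ℝ)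

/-- `x` is the Turán density `π(F)`, i.e. the limit of `ex(n,F)/C(n,r)`. -/
def HasTuranDensity (r : ℕ) (F : HGraph r) (x : ℝ) : Prop :=
  Tendsto (fun n : ℕ => (exN r n F : ℝ) / (n.choose r : ℝ)) atTop (nhds x)

/-- `ex(n,(t+1)F)`: the maximum number of edges of an `n`-vertex `r`-graph with no
`t+1` pairwise vertex-disjoint copies of `F`. -/
noncomputable def exMatchN (r n t : ℕ) (F : HGraph r) : ℕ :=
  sSup {m | ∃ H : HGraph r, H.verts.card = n ∧ ¬ F.HasMatching H (t+1) ∧ H.edges.card = m}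

/-- `H ∈ EX(n,F)`. -/
def IsExtremalFree (r n : ℕ) (F H : HGraph r) : Prop :=
  H.verts.card = n ∧ ¬ F.IsCopyIn H ∧ H.edges.card = exN r n F

/-- `H ∈ EX(n,(t+1)F)`. -/
def IsExtremalMatchingFree (r n t : ℕ) (F H : HGraph r) : Prop :=
  H.verts.card = n ∧ ¬ F.HasMatching H (t+1) ∧ H.edges.card = exMatchN r n t F

/-- `F` is `(f1, f2)`-bounded at `n`. -/
def BoundedAt (r n : ℕ) (F : HGraph r) (f1 f2 : ℝ) : Prop :=
  ∀ H : HGraph r, H.verts.card = n → ¬ F.IsCopyIn H →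
    dN r n F - f1 ≤ H.avgDeg → (H.maxDeg : ℝ) ≤ dN r n F + f2

/-- `ex(·,F)` is `g`-smooth at `n`: `|δ(n,F) − d(n−1,F)| ≤ g(n)`. -/
def SmoothAt (r n : ℕ) (F : HGraph r) (g : ℝ) : Prop :=
  |deltaN r n F - dN r (n-1) F| ≤ g

/-- The collection `H 0, …, H t` (on a common vertex set) has a rainbow `F`-matching. -/
def HasRainbowMatching (r t : ℕ) (F : HGraph r) (H : Fin (t+1) → HGraph r) : Prop :=
  ∃ S : Fin (t+1) → Finset ℕ,
    (∀ i, S i ⊆ (H i).verts ∧ (S i).card = F.verts.card) ∧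
    (∀ i j, i ≠ j → Disjoint (S i) (S j)) ∧
    ∀ i, F.IsCopyIn ((H i).induce (S i))

/-!  Patterns -/

/-- An `r`-uniform pattern: a finite index set together with a collection of
`r`-multisets on it. -/
structure Pattern (r : ℕ) where
  idx : Finset ℕ
  mE : Finset (Multiset ℕ)
  card_eq : ∀ s ∈ mE, Multiset.card s = r
  mem_idx : ∀ s ∈ mE, ∀ i ∈ s, i ∈ idx

namespace Pattern

variable {r : ℕ}

/-- The pattern `P − i`. -/
def erase (P : Pattern r) (i : ℕ) : Pattern r where
  idx := P.idx.erase i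
  mE := P.mE.filter fun s => i ∉ s
  card_eq := fun s hs => P.card_eq s (Finset.mem_filter.mp hs).1
  mem_idx := by
    intro s hs j hj
    have h1 := Finset.mem_filter.mp hs
    refine Finset.mem_erase.mpr ⟨?_, P.mem_idx s h1.1 j hj⟩
    rintro rfl
    exact h1.2 hj

/-- `H` is a `P`-construction: a blowup of the pattern `P`. -/
def IsConstruction (P : Pattern r) (H : HGraph r) : Prop :=
  ∃ part : ℕ → ℕ, (∀ v ∈ H.verts, part v ∈ P.idx) ∧
    ∀ e : Finset ℕ, e ∈ H.edges ↔ (e ⊆ H.verts ∧ e.card = r ∧ Multiset.map part e.val ∈ P.mE)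

/-- `H` is a `P`-subconstruction: a subgraph of a `P`-construction. -/
def IsSubconstruction (P : Pattern r) (H : HGraph r) : Prop :=
  ∃ G : HGraph r, P.IsConstruction G ∧ H.verts ⊆ G.verts ∧ H.edges ⊆ G.edges

end Pattern

/-- `Λ(P,n)`: the maximum number of edges of an `n`-vertex `P`-construction. -/
noncomputable def patEx (r : ℕ) (P : Pattern r) (n : ℕ) : ℕ :=
  sSup {m | ∃ H : HGraph r, P.IsConstruction H ∧ H.verts.card = n ∧ H.edges.card = m}

/-- The Lagrangian `λ(P) = lim Λ(P,n)/C(n,r)`. -/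
noncomputable def patLagrangian (r : ℕ) (P : Pattern r) : ℝ :=
  limUnder atTop fun n : ℕ => (patEx r P n : ℝ) / (n.choose r : ℝ)

/-- The pattern `P` is minimal: `λ(P−i) < λ(P)` for all `i`. -/
def Pattern.Minimal {r : ℕ} (P : Pattern r) : Prop :=
  ∀ i ∈ P.idx, patLagrangian r (P.erase i) < patLagrangian r P

/-- `(F,P)` is a Turán pair. -/
def IsTuranPair (r : ℕ) (F : HGraph r) (P : Pattern r) : Prop :=
  (∀ H : HGraph r, P.IsConstruction H → ¬ F.IsCopyIn H) ∧
  (∀ H : HGraph r, ¬ F.IsCopyIn H → H.edges.card = exN r H.verts.card F →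
    P.IsConstruction H)

/-- `F` is edge-stable with respect to `P` (with Turán density `π`). -/
def EdgeStable (r : ℕ) (F : HGraph r) (P : Pattern r) (π : ℝ) : Prop :=
  ∀ δ : ℝ, 0 < δ → ∃ N₀ : ℕ, ∃ ζ : ℝ, 0 < ζ ∧
    ∀ H : HGraph r, N₀ ≤ H.verts.card → ¬ F.IsCopyIn H →
      (π - ζ) * (H.verts.card.choose r : ℝ) ≤ (H.edges.card : ℝ) →
      ∃ H' : HGraph r, H'.verts ⊆ H.verts ∧ H'.edges ⊆ H.edges ∧
        (π - δ) * (H.verts.card.choose r : ℝ) ≤ (H'.edges.card : ℝ) ∧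
        P.IsSubconstruction H'

/-- `F` is weakly vertex-extendable with respect to `P` (with Turán density `π`). -/
def WeaklyVertexExtendable (r : ℕ) (F : HGraph r) (P : Pattern r) (π : ℝ) : Prop :=
  ∀ δ : ℝ, 0 < δ → ∃ N₀ : ℕ, ∃ ζ : ℝ, 0 < ζ ∧
    ∀ H : HGraph r, N₀ ≤ H.verts.card → ¬ F.IsCopyIn H →
      (π - ζ) * (((H.verts.card - 1).choose (r-1) : ℕ) : ℝ) ≤ (H.minDeg : ℝ) →
      ∀ v ∈ H.verts, P.IsSubconstruction (H.deleteVert v) →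
        (H.deg v : ℝ) ≤ (π + δ) * (((H.verts.card - 1).choose (r-1) : ℕ) : ℝ)

/-- `F` is degree-stable with respect to `P` (with Turán density `π`). -/
def DegreeStable (r : ℕ) (F : HGraph r) (P : Pattern r) (π : ℝ) : Prop :=
  ∃ ζ : ℝ, 0 < ζ ∧ ∃ N₀ : ℕ,
    ∀ H : HGraph r, N₀ ≤ H.verts.card → ¬ F.IsCopyIn H →
      (π - ζ) * (((H.verts.card - 1).choose (r-1) : ℕ) : ℝ) ≤ (H.minDeg : ℝ) →
      P.IsSubconstruction H

/-!  Concrete constructions -/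

/-- The generalized Turán graph `T_r(·,ℓ)` on vertex set `V` (parts are residue
classes mod `ℓ`; on an interval these are balanced). -/
def turanOn (r ℓ : ℕ) (V : Finset ℕ) : HGraph r :=
  HGraph.ofEdges r V ((Finset.powersetCard r V).filter
    fun e => ∀ u ∈ e, ∀ v ∈ e, u % ℓ = v % ℓ → u = v)

/-- The `r`-graph on `V₁ ∪ V₂` whose edges are all `r`-sets meeting both parts. -/
def crossOn (r : ℕ) (V₁ V₂ : Finset ℕ) : HGraph r :=
  HGraph.ofEdges r (V₁ ∪ V₂) ((Finset.powersetCard r (V₁ ∪ V₂)).filter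
    fun e => (e ∩ V₁).Nonempty ∧ (e ∩ V₂).Nonempty)

/-- The `r`-graph on `V₁ ∪ V₂` whose edges are all `r`-sets meeting `V₁` in an odd
number of vertices. -/
def oddCross (r : ℕ) (V₁ V₂ : Finset ℕ) : HGraph r :=
  HGraph.ofEdges r (V₁ ∪ V₂) ((Finset.powersetCard r (V₁ ∪ V₂)).filter
    fun e => Odd (e ∩ V₁).card)

/-- The Fano plane. -/
def fano : HGraph 3 :=
  HGraph.ofEdges 3 (Finset.Icc 1 7)
    {({1,2,3} : Finset ℕ), {3,4,5}, {5,6,1}, {1,7,4}, {2,7,5}, {3,7,6}, {2,4,6}}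

/-- The generalized triangle `𝕋_r`, with edges `{1,…,r}`, `{1,…,r−1,r+1}` and
`{r,…,2r−1}`. -/
def genTri (r : ℕ) : HGraph r :=
  HGraph.ofEdges r (Finset.Icc 1 (2*r - 1))
    {Finset.Icc 1 r, Finset.Icc 1 (r-1) ∪ {r+1}, Finset.Icc r (2*r - 1)}

/-- `G` is a blowup of the `r`-graph `W` (viewing `W` as a pattern). -/
def IsBlowupOf {r : ℕ} (W G : HGraph r) : Prop :=
  ∃ part : ℕ → ℕ, (∀ v ∈ G.verts, part v ∈ W.verts) ∧
    ∀ e : Finset ℕ, e ∈ G.edges ↔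
      (e ⊆ G.verts ∧ e.card = r ∧ ∃ f ∈ W.edges, Multiset.map part e.val = f.val)

/-- The expansion `H^F` of an `r`-graph `F`: for every pair of vertices not covered
by an edge of `F`, add an edge consisting of this pair plus `r−2` new vertices,
these sets of new vertices being pairwise disjoint. -/
def HGraph.expansion {r : ℕ} (F : HGraph r) : HGraph r :=
  HGraph.ofEdges r
    (F.verts ∪ (((F.verts ×ˢ F.verts).filter fun p =>
        p.1 < p.2 ∧ ∀ e ∈ F.edges, ¬ (p.1 ∈ e ∧ p.2 ∈ e)).biUnion fun p =>
      (Finset.range (r-2)).image fun s =>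
        (F.verts.sup id + 1) + (p.1 * (F.verts.sup id + 1) + p.2) * r + s))
    (F.edges ∪ (((F.verts ×ˢ F.verts).filter fun p =>
        p.1 < p.2 ∧ ∀ e ∈ F.edges, ¬ (p.1 ∈ e ∧ p.2 ∈ e)).image fun p =>
      insert p.1 (insert p.2 ((Finset.range (r-2)).image fun s =>
        (F.verts.sup id + 1) + (p.1 * (F.verts.sup id + 1) + p.2) * r + s))))

/-- A `2`-graph is a tree on `k` vertices: `k` vertices, `k−1` edges, connected. -/
def IsTreeGraph (k : ℕ) (T : HGraph 2) : Prop :=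
  T.verts.card = k ∧ T.edges.card = k - 1 ∧
  ∀ S : Finset ℕ, S ⊆ T.verts → S.Nonempty → S ≠ T.verts →
    ∃ e ∈ T.edges, (e ∩ S).Nonempty ∧ (e \ S).Nonempty

/-- `T` satisfies the Erdős–Sós property for `k`: every graph with average degree
greater than `k−2` contains `T`. -/
def ErdosSos (k : ℕ) (T : HGraph 2) : Prop :=
  ∀ G : HGraph 2, ((k : ℝ) - 2) * (G.verts.card : ℝ) < 2 * (G.edges.card : ℝ) →
    T.IsCopyIn G

/-- The `(r−2)`-expansion `Exp(T)` of a `2`-graph `T`: enlarge every edge by one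
common fixed set of `r−2` new vertices. -/
def expTree (r : ℕ) (T : HGraph 2) : HGraph r :=
  HGraph.ofEdges r
    (T.verts ∪ ((Finset.range (r-2)).image fun s => T.verts.sup id + 1 + s))
    (T.edges.image fun e =>
      e ∪ ((Finset.range (r-2)).image fun s => T.verts.sup id + 1 + s))

/-- The chromatic number of a `2`-graph. -/
noncomputable def chrom (F : HGraph 2) : ℕ :=
  sInf {k | ∃ c : ℕ → ℕ, (∀ v ∈ F.verts, c v < k) ∧
    ∀ e ∈ F.edges, ∀ u ∈ e, ∀ v ∈ e, u ≠ v → c u ≠ c v}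

/-- A graph is edge-critical if deleting some edge lowers its chromatic number. -/
def EdgeCritical (F : HGraph 2) : Prop :=
  ∃ e ∈ F.edges, chrom (HGraph.ofEdges 2 F.verts (F.edges.erase e)) < chrom F

/-- `H` is semibipartite: the vertex set splits into `V₁ ∪ V₂` so that every edge
has exactly one vertex in `V₁`. -/
def Semibipartite (r : ℕ) (H : HGraph r) : Prop :=
  ∃ V₁ ⊆ H.verts, ∀ e ∈ H.edges, (e ∩ V₁).card = 1

/-- `H` is a `K_ℓ^r`-subconstruction, i.e. an `ℓ`-partite `r`-graph. -/
def IsKlSub (r ℓ : ℕ) (H : HGraph r) : Prop :=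
  ∃ f : ℕ → ℕ, (∀ v ∈ H.verts, f v < ℓ) ∧
    ∀ e ∈ H.edges, ∀ u ∈ e, ∀ v ∈ e, f u = f v → u = v

/-- The Lagrangian `λ(W)` of an `r`-graph `W`, viewing `W` as a pattern. -/
noncomputable def hgLagrangian (r : ℕ) (W : HGraph r) : ℝ :=
  limUnder atTop fun n : ℕ =>
    ((sSup {m | ∃ G : HGraph r, IsBlowupOf W G ∧ G.verts.card = n ∧ G.edges.card = m} : ℕ) : ℝ)
      / (n.choose r : ℝ)

/-- The `r`-graph `B(r,ℓ+1)`. -/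
def BGraph (r ℓ : ℕ) : HGraph r :=
  HGraph.ofEdges r (Finset.Icc 1 (ℓ+1))
    (insert (Finset.Icc 1 r)
      ((Finset.powersetCard r (Finset.Icc 2 (ℓ+1))).filter
        fun e => (e ∩ Finset.Icc 2 r).card ≤ 1))

/-- The `r`-uniform matching of size two, `M_2^r`. -/
def matching2 (r : ℕ) : HGraph r :=
  HGraph.ofEdges r (Finset.Icc 1 (2*r)) {Finset.Icc 1 r, Finset.Icc (r+1) (2*r)}

/-- The expanded triangle `𝓒_3^{2r}`. -/
def expandedTriangle (r : ℕ) : HGraph (2*r) :=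
  HGraph.ofEdges (2*r) (Finset.Icc 1 (3*r))
    {Finset.Icc 1 (2*r), Finset.Icc (r+1) (3*r), Finset.Icc 1 r ∪ Finset.Icc (2*r+1) (3*r)}

/-- The `4`-graph `𝔽_{4,3}`. -/
def F43 : HGraph 4 :=
  HGraph.ofEdges 4 (Finset.Icc 1 7)
    {({1,2,3,4} : Finset ℕ), {1,2,3,5}, {1,2,3,6}, {1,2,3,7}, {4,5,6,7}}

/-- The `3`-graph `𝔽_{3,2}`. -/
def F32 : HGraph 3 :=
  HGraph.ofEdges 3 (Finset.Icc 1 5)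
    {({1,2,3} : Finset ℕ), {1,2,4}, {1,2,5}, {3,4,5}}

/-- `H` contains pairwise vertex-disjoint copies of `F i`, `ts i` many of each. -/
def HasMixedMatching (r k : ℕ) (F : Fin k → HGraph r) (ts : Fin k → ℕ)
    (H : HGraph r) : Prop :=
  ∃ S : (i : Fin k) → Fin (ts i) → Finset ℕ,
    (∀ i j, S i j ⊆ H.verts ∧ (S i j).card = (F i).verts.card) ∧
    (∀ p q : Σ i : Fin k, Fin (ts i), p ≠ q → Disjoint (S p.1 p.2) (S q.1 q.2)) ∧
    ∀ i j, (F i).IsCopyIn (H.induce (S i j))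

/-- `ex(n, ⊔ᵢ tᵢ Fᵢ)`. -/
noncomputable def exMixedN (r k : ℕ) (F : Fin k → HGraph r) (ts : Fin k → ℕ)
    (n : ℕ) : ℕ :=
  sSup {m | ∃ H : HGraph r, H.verts.card = n ∧ ¬ HasMixedMatching r k F ts H ∧
    H.edges.card = m}

/-- `ex(n, {F₁,…,F_k})`. -/
noncomputable def exFamN (r k : ℕ) (F : Fin k → HGraph r) (n : ℕ) : ℕ :=
  sSup {m | ∃ H : HGraph r, H.verts.card = n ∧ (∀ i, ¬ (F i).IsCopyIn H) ∧
    H.edges.card = m}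

/-
A `4`-graph is `𝔽_{4,3}`-free exactly when the neighbourhood of a triple never contains an edge. If
such a graph is nearly as dense as the odd construction, then after deleting vertices of small
degree, cutting along the neighbourhood of a triple of maximum codegree approximates it by an odd
construction; moving each vertex to the side prescribed by its link, and comparing edges of the
wrong parity with missing edges of the right one (Kruskal–Katona bounds their shadow from below),
shows that an extremal graph is an odd construction exactly.

In a graph with no `t + 1` disjoint copies, a vertex of degree well above that of the odd
construction extends any small family of disjoint copies avoiding it, so there are at most `t` such
vertices. If there were fewer, deleting a maximal family of disjoint copies would leave too few
edges. Hence there are exactly `t`, no copy avoids them all, and the rest is an odd construction.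
Comparing its parts with a balanced bipartition gives the bound on `m`.
-/

section Counting

open Finset

variable {α : Type*} [DecidableEq α] {V A W : Finset α} {E M : Finset (Finset α)}

lemma factorial_mul_choose_le_pow (n k : ℕ) : k.factorial * n.choose k ≤ n ^ k :=
  (Nat.descFactorial_eq_factorial_mul_choose n k).symm.trans_le (Nat.descFactorial_le_pow n k)

lemma card_filter_card_inter_eq (V A : Finset α) (i j : ℕ) :
    #{T ∈ powersetCard (i + j) V | #(T ∩ A) = i} = (#(V ∩ A)).choose i * (#(V \ A)).choose j := by
  rw [← card_powersetCard, ← card_powersetCard, ← card_product]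
  have union_inter : ∀ {X Y : Finset α}, X ⊆ V ∩ A → Y ⊆ V \ A → (X ∪ Y) ∩ A = X := by
    intro X Y hX hY
    rw [union_inter_distrib_right, inter_eq_left.2 (hX.trans inter_subset_right),
      disjoint_iff_inter_eq_empty.1 (disjoint_of_subset_left hY sdiff_disjoint), union_empty]
  have union_sdiff : ∀ {X Y : Finset α}, X ⊆ V ∩ A → Y ⊆ V \ A → (X ∪ Y) \ A = Y := by
    intro X Y hX hY
    rw [union_sdiff_distrib, sdiff_eq_empty_iff_subset.2 (hX.trans inter_subset_right),
      empty_union, (disjoint_of_subset_left hY sdiff_disjoint).sdiff_eq_left]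
  refine card_bij' (fun T _ => (T ∩ A, T \ A)) (fun p _ => p.1 ∪ p.2) ?_ ?_ ?_ ?_
  · intro T hT
    simp only [mem_filter, mem_powersetCard, mem_product] at hT ⊢
    have := card_inter_add_card_sdiff T A
    exact ⟨⟨inter_subset_inter_right hT.1.1, hT.2⟩, sdiff_subset_sdiff hT.1.1 le_rfl, by omega⟩
  · rintro ⟨X, Y⟩ hp
    simp only [mem_filter, mem_powersetCard, mem_product] at hp ⊢
    obtain ⟨⟨hX, rfl⟩, hY, rfl⟩ := hp
    have hXY : Disjoint X Y :=
      disjoint_of_subset_left (hX.trans inter_subset_right)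
        (disjoint_of_subset_right hY disjoint_sdiff)
    exact ⟨⟨union_subset (hX.trans inter_subset_left) (hY.trans sdiff_subset),
      card_union_of_disjoint hXY⟩, by rw [union_inter hX hY]⟩
  · intro T _
    exact sup_inf_sdiff T A
  · rintro ⟨X, Y⟩ hp
    simp only [mem_powersetCard, mem_product] at hp
    exact Prod.ext (union_inter hp.1.1 hp.2.1) (union_sdiff hp.1.1 hp.2.1)

lemma filter_filter_powersetCard_subset {f : Finset α} (h : f ⊆ V) (k : ℕ)
    (p : Finset α → Prop) [DecidablePred p] :
    {T ∈ {T ∈ powersetCard k V | p T} | T ⊆ f} = {T ∈ powersetCard k f | p T} := by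
  ext T
  simp only [mem_filter, mem_powersetCard]
  exact ⟨fun ⟨⟨⟨_, hk⟩, hp⟩, hf⟩ => ⟨⟨hf, hk⟩, hp⟩,
    fun ⟨⟨hf, hk⟩, hp⟩ => ⟨⟨⟨hf.trans h, hk⟩, hp⟩, hf⟩⟩

lemma sum_card_filter_comm {β γ : Type*} (s : Finset β) (t : Finset γ) (R : β → γ → Prop)
    [∀ b c, Decidable (R b c)] : ∑ b ∈ s, #{c ∈ t | R b c} = ∑ c ∈ t, #{b ∈ s | R b c} :=
  sum_card_bipartiteAbove_eq_sum_card_bipartiteBelow R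

lemma sum_card_filter_superset_le {r k : ℕ} {L : Finset (Finset α)} (hL : ∀ T ∈ L, #T = k)
    (hM : ∀ f ∈ M, #f = r) : ∑ T ∈ L, #{f ∈ M | T ⊆ f} ≤ r.choose k * #M := by
  rw [sum_card_filter_comm, mul_comm, ← smul_eq_mul]
  refine sum_le_card_nsmul _ _ _ fun f hf => ?_
  rw [← hM f hf, ← card_powersetCard]
  refine card_le_card fun T hT => ?_
  have hT := mem_filter.1 hT
  exact mem_powersetCard.2 ⟨hT.2, hL T hT.1⟩

lemma sum_powersetCard_card_filter_superset {r : ℕ} (hE : E ⊆ powersetCard r V) (k : ℕ) :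
    ∑ T ∈ powersetCard k V, #{f ∈ E | T ⊆ f} = r.choose k * #E := by
  rw [sum_card_filter_comm, mul_comm]
  refine sum_const_nat fun f hf => ?_
  obtain ⟨hfV, hfr⟩ := mem_powersetCard.1 (hE hf)
  have := filter_filter_powersetCard_subset hfV k (fun _ => True)
  simp only [filter_true] at this
  rw [this, card_powersetCard, hfr]

lemma card_filter_not_disjoint_powersetCard_three_le (W X : Finset α) :
    #{T ∈ powersetCard 3 W | ¬ Disjoint T X} ≤ #X * #W ^ 2 := by
  have hsub : {T ∈ powersetCard 3 W | ¬ Disjoint T X} ⊆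
      X.biUnion fun x => (powersetCard 2 W).image (insert x) := by
    intro T hT
    obtain ⟨hTW, hTX⟩ := mem_filter.1 hT
    obtain ⟨x, hxT, hxX⟩ := not_disjoint_iff.1 hTX
    rw [mem_powersetCard] at hTW
    refine mem_biUnion.2 ⟨x, hxX, mem_image.2 ⟨T.erase x, mem_powersetCard.2
      ⟨(erase_subset _ _).trans hTW.1, ?_⟩, insert_erase hxT⟩⟩
    rw [card_erase_of_mem hxT, hTW.2]
  refine (card_le_card hsub).trans (card_biUnion_le_card_mul _ _ _ fun x _ => ?_)
  refine card_image_le.trans ?_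
  rw [card_powersetCard]
  have := factorial_mul_choose_le_pow #W 2
  rw [Nat.factorial_two] at this
  omega

lemma card_add_card_sdiff_comm (X Y : Finset (Finset α)) : #X + #(Y \ X) = #Y + #(X \ Y) := by
  rw [add_comm, card_sdiff_add_card, add_comm #Y, card_sdiff_add_card, union_comm]

end Counting

section Hypergraph

open Finset

variable {α : Type*} [DecidableEq α] {V S : Finset α} {E E' : Finset (Finset α)}

/-- A `4`-graph with edge set `E` has *independent neighbourhoods* if the neighbourhood of a triple
never contains an edge. This is `𝔽_{4,3}`-freeness, stated without reference to embeddings. -/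
def HasIndepNbhds (E : Finset (Finset α)) : Prop :=
  ∀ T f : Finset α, #T = 3 → f ∈ E → ∃ w ∈ f, insert w T ∉ E

/-- The neighbourhood in `V` of a set `T` (of size one less than the edges). -/
def nbhd (E : Finset (Finset α)) (V T : Finset α) : Finset α := {w ∈ V | insert w T ∈ E}

/-- The degree of the vertex `v` in the hypergraph with edge set `E`. -/
def degree (E : Finset (Finset α)) (v : α) : ℕ := #{f ∈ E | v ∈ f}

/-- The edge set of the subhypergraph induced on `S`. -/
def restrict (E : Finset (Finset α)) (S : Finset α) : Finset (Finset α) := {f ∈ E | f ⊆ S}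

lemma HasIndepNbhds.mono (h : HasIndepNbhds E) (hE : E' ⊆ E) : HasIndepNbhds E' :=
  fun T f hT hf => (h T f hT (hE hf)).imp fun _ hw => ⟨hw.1, fun h' => hw.2 (hE h')⟩

lemma HasIndepNbhds.card_inter_nbhd_lt (hI : HasIndepNbhds E) {T f : Finset α} (hT : #T = 3)
    (hf : f ∈ E) : #(f ∩ nbhd E V T) < #f := by
  obtain ⟨w, hwf, hw⟩ := hI T f hT hf
  refine card_lt_card (inter_subset_left.ssubset_of_ne fun h => hw ?_)
  have hw' : w ∈ f ∩ nbhd E V T := h.symm ▸ hwf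
  exact (mem_filter.1 (mem_inter.1 hw').2).2

lemma restrict_subset (E : Finset (Finset α)) (S : Finset α) : restrict E S ⊆ E :=
  filter_subset _ _

lemma restrict_subset_powersetCard {r : ℕ} (hE : E ⊆ powersetCard r V) (S : Finset α) :
    restrict E S ⊆ powersetCard r S := fun _ hf =>
  mem_powersetCard.2 ⟨(mem_filter.1 hf).2, (mem_powersetCard.1 (hE (mem_filter.1 hf).1)).2⟩

lemma restrict_self {r : ℕ} (hE : E ⊆ powersetCard r V) : restrict E V = E :=
  filter_true_of_mem fun _ hf => (mem_powersetCard.1 (hE hf)).1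

lemma restrict_restrict {S' : Finset α} (h : S' ⊆ S) :
    restrict (restrict E S) S' = restrict E S' := by
  ext f
  simp only [restrict, mem_filter]
  exact ⟨fun hf => ⟨hf.1.1, hf.2⟩, fun hf => ⟨⟨hf.1, hf.2.trans h⟩, hf.2⟩⟩

lemma card_restrict_erase_add_degree (E : Finset (Finset α)) (S : Finset α) (v : α) :
    #(restrict E (S.erase v)) + degree (restrict E S) v = #(restrict E S) := by
  have : restrict E (S.erase v) = {f ∈ restrict E S | v ∉ f} := by
    ext f
    simp only [restrict, mem_filter, subset_erase, and_assoc]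
  rw [this, degree, add_comm, card_filter_add_card_filter_not]

lemma degree_mono (h : E' ⊆ E) (v : α) : degree E' v ≤ degree E v :=
  card_le_card (filter_subset_filter _ h)

lemma sum_degree (E : Finset (Finset α)) (A : Finset α) :
    ∑ v ∈ A, degree E v = ∑ f ∈ E, #(f ∩ A) := by
  simp only [degree]
  rw [sum_card_filter_comm]
  simp only [filter_mem_eq_inter, inter_comm]

lemma sum_degree_of_subset_powersetCard {r : ℕ} (hE : E ⊆ powersetCard r V) :
    ∑ v ∈ V, degree E v = r * #E := by
  rw [sum_degree, mul_comm]
  refine sum_const_nat fun f hf => ?_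
  obtain ⟨hfV, hfr⟩ := mem_powersetCard.1 (hE hf)
  rw [inter_eq_left.2 hfV, hfr]

lemma card_filter_superset_eq_card_nbhd {r : ℕ} (hE : E ⊆ powersetCard (r + 1) V) {T : Finset α}
    (hT : #T = r) : #{f ∈ E | T ⊆ f} = #(nbhd E V T) := by
  have hnot : ∀ {w}, insert w T ∈ E → w ∉ T := by
    intro w hw hwT
    have := (mem_powersetCard.1 (hE hw)).2
    rw [insert_eq_of_mem hwT] at this
    omega
  symm
  refine card_bij (fun w _ => insert w T)
    (fun w hw => mem_filter.2 ⟨(mem_filter.1 hw).2, subset_insert _ _⟩) ?_ ?_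
  · intro w hw w' _ h
    have hw' : w ∈ insert w' T := h ▸ mem_insert_self w T
    exact (mem_insert.1 hw').resolve_right (hnot (mem_filter.1 hw).2)
  · intro f hf
    obtain ⟨hfE, hTf⟩ := mem_filter.1 hf
    obtain ⟨hfV, hfr⟩ := mem_powersetCard.1 (hE hfE)
    obtain ⟨w, _, rfl⟩ := exists_eq_insert_iff.2 ⟨hTf, by rw [hT, hfr]⟩
    exact ⟨w, mem_filter.2 ⟨hfV (mem_insert_self _ _), hfE⟩, rfl⟩

end Hypergraph

section OddSets

open Finset

variable {α : Type*} [DecidableEq α] {V A : Finset α} {E : Finset (Finset α)} {r : ℕ}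

/-- The `r`-subsets of `V` meeting `A` in an odd number of points. For `r = 4` this is the edge set
of `B_4^{odd}`; for `r = 3` it contains the link of every vertex outside `A`. -/
def oddSets (r : ℕ) (V A : Finset α) : Finset (Finset α) :=
  {q ∈ powersetCard r V | Odd #(q ∩ A)}

lemma oddSets_subset : oddSets r V A ⊆ powersetCard r V := filter_subset _ _

lemma sdiff_oddSets (hE : E ⊆ powersetCard r V) :
    E \ oddSets r V A = {f ∈ E | Even #(f ∩ A)} := by
  ext f
  simp only [oddSets, Finset.mem_sdiff, mem_filter, not_and, Nat.not_odd_iff_even]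
  exact and_congr_right fun hf => ⟨fun h => h (hE hf), fun h _ => h⟩

lemma card_sdiff_oddSets_eq_sum (hE : E ⊆ powersetCard r V) :
    #(E \ oddSets r V A) = ∑ f ∈ E, if Even #(f ∩ A) then 1 else 0 := by
  rw [sdiff_oddSets hE, card_filter]

lemma card_oddSets_four (V A : Finset α) : #(oddSets 4 V A) =
    #(V ∩ A) * (#(V \ A)).choose 3 + (#(V ∩ A)).choose 3 * #(V \ A) := by
  have hsplit : oddSets 4 V A =
      {T ∈ powersetCard (1 + 3) V | #(T ∩ A) = 1} ∪
        {T ∈ powersetCard (3 + 1) V | #(T ∩ A) = 3} := by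
    ext T
    simp only [oddSets, mem_union, mem_filter, ← and_or_left]
    refine and_congr_right fun hT => ?_
    have hle : #(T ∩ A) ≤ 4 := (card_le_card inter_subset_left).trans (mem_powersetCard.1 hT).2.le
    generalize #(T ∩ A) = c at hle ⊢
    interval_cases c <;> decide
  rw [hsplit, card_union_of_disjoint, card_filter_card_inter_eq, card_filter_card_inter_eq,
    Nat.choose_one_right, Nat.choose_one_right]
  rw [disjoint_filter]
  omega

lemma card_oddSets_three (V A : Finset α) :
    #(oddSets 3 V A) = #(V ∩ A) * (#(V \ A)).choose 2 + (#(V ∩ A)).choose 3 := by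
  have hsplit : oddSets 3 V A =
      {T ∈ powersetCard (1 + 2) V | #(T ∩ A) = 1} ∪
        {T ∈ powersetCard (3 + 0) V | #(T ∩ A) = 3} := by
    ext T
    simp only [oddSets, mem_union, mem_filter, ← and_or_left]
    refine and_congr_right fun hT => ?_
    have hle : #(T ∩ A) ≤ 3 := (card_le_card inter_subset_left).trans (mem_powersetCard.1 hT).2.le
    generalize #(T ∩ A) = c at hle ⊢
    interval_cases c <;> decide
  rw [hsplit, card_union_of_disjoint, card_filter_card_inter_eq, card_filter_card_inter_eq,
    Nat.choose_one_right, Nat.choose_zero_right, mul_one]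
  rw [disjoint_filter]
  omega

lemma odd_card_inter_insert {T : Finset α} {w : α} (hw : w ∉ T) :
    Odd #(insert w T ∩ A) ↔ (w ∈ A ↔ Even #(T ∩ A)) := by
  by_cases hA : w ∈ A
  · rw [insert_inter_of_mem hA, card_insert_of_notMem fun h => hw (mem_inter.1 h).1,
      Nat.odd_add_one, Nat.not_odd_iff_even]
    simp only [hA, true_iff]
  · rw [insert_inter_of_notMem hA, ← Nat.not_even_iff_odd]
    simp only [hA, false_iff]

lemma card_inter_sdiff_right {f : Finset α} (hf : f ⊆ V) (A : Finset α) :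
    #(f ∩ (V \ A)) + #(f ∩ A) = #f := by
  rw [inter_sdiff_left_comm, ← inter_sdiff_assoc, inter_eq_right.2 hf, add_comm]
  exact card_inter_add_card_sdiff f A

lemma oddSets_four_sdiff (V A : Finset α) : oddSets 4 V (V \ A) = oddSets 4 V A := by
  refine filter_congr fun f hf => ?_
  obtain ⟨hfV, hf4⟩ := mem_powersetCard.1 hf
  have := card_inter_sdiff_right hfV A
  rw [Nat.odd_iff, Nat.odd_iff]
  omega

lemma hasIndepNbhds_oddSets (V A : Finset α) : HasIndepNbhds (oddSets 4 V A) := by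
  intro T f hT hf
  by_contra! hw
  obtain ⟨hf4, hodd⟩ := mem_filter.1 hf
  rw [mem_powersetCard] at hf4
  have hiff : ∀ w ∈ f, (w ∈ A ↔ Even #(T ∩ A)) := by
    intro w hwf
    obtain ⟨hwT4, hwodd⟩ := mem_filter.1 (hw w hwf)
    refine (odd_card_inter_insert fun hwT => ?_).1 hwodd
    rw [insert_eq_of_mem hwT, mem_powersetCard] at hwT4
    omega
  by_cases he : Even #(T ∩ A)
  · rw [inter_eq_left.2 fun w hwf => (hiff w hwf).2 he, hf4.2] at hodd
    exact absurd hodd (by decide)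
  · rw [disjoint_iff_inter_eq_empty.1
      (disjoint_left.2 fun w hwf hwA => he ((hiff w hwf).1 hwA)), card_empty] at hodd
    exact absurd hodd (by decide)

lemma cast_choose_three (a : ℕ) : (a.choose 3 : ℝ) = a * (a - 1) * (a - 2) / 6 := by
  rw [Nat.cast_choose_eq_descPochhammer_div]
  simp only [descPochhammer_succ_right, descPochhammer_zero, Nat.factorial]
  simp

lemma cast_card_oddSets_four (hA : A ⊆ V) :
    (#(oddSets 4 V A) : ℝ) = #A * #(V \ A) * ((#A : ℝ) ^ 2 + (#(V \ A) : ℝ) ^ 2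
      - 3 * #A - 3 * #(V \ A) + 4) / 6 := by
  rw [card_oddSets_four, inter_eq_right.2 hA]
  push_cast
  rw [cast_choose_three, cast_choose_three]
  ring

end OddSets

section MaxCodegree

open Finset

variable {α : Type*} [DecidableEq α] {V A : Finset α} {E : Finset (Finset α)}

lemma twentyfour_mul_card_le (hE : E ⊆ powersetCard 4 V)
    (hcodeg : ∀ T ∈ powersetCard 3 V, #{f ∈ E | T ⊆ f} ≤ #A) : 24 * #E ≤ #V ^ 3 * #A := by
  have hsum : 4 * #E ≤ (#V).choose 3 * #A := by
    have := sum_le_card_nsmul _ _ _ hcodeg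
    rwa [sum_powersetCard_card_filter_superset hE, card_powersetCard, smul_eq_mul] at this
  have hchoose : 6 * (#V).choose 3 ≤ #V ^ 3 := factorial_mul_choose_le_pow #V 3
  nlinarith [Nat.mul_le_mul_right #A hchoose]

-- Counts the pairs consisting of an edge and a triple in it with two points in `A`.
lemma sum_choose_two_mul_le (hE : E ⊆ powersetCard 4 V) (hA : A ⊆ V)
    (hcodeg : ∀ T ∈ powersetCard 3 V, #{f ∈ E | T ⊆ f} ≤ #A) :
    2 * ∑ f ∈ E, (#(f ∩ A)).choose 2 * #(f \ A) ≤ #A ^ 3 * #(V \ A) := by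
  have hsum : ∑ T ∈ powersetCard 3 V with #(T ∩ A) = 2, #{f ∈ E | T ⊆ f} ≤
      ((#A).choose 2 * #(V \ A)) * #A := by
    refine (sum_le_card_nsmul _ _ _ fun T hT => hcodeg T (mem_filter.1 hT).1).trans_eq ?_
    rw [card_filter_card_inter_eq V A 2 1, Nat.choose_one_right, inter_eq_right.2 hA, smul_eq_mul]
  have hedge : ∀ f ∈ E, #{T ∈ powersetCard 3 V | #(T ∩ A) = 2 ∧ T ⊆ f} =
      (#(f ∩ A)).choose 2 * #(f \ A) := by
    intro f hf
    rw [← filter_filter, filter_filter_powersetCard_subset (mem_powersetCard.1 (hE hf)).1,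
      card_filter_card_inter_eq f A 2 1, Nat.choose_one_right]
  rw [sum_card_filter_comm] at hsum
  simp only [filter_filter] at hsum
  rw [sum_congr rfl hedge] at hsum
  have hchoose : 2 * (#A).choose 2 ≤ #A ^ 2 := factorial_mul_choose_le_pow #A 2
  calc 2 * ∑ f ∈ E, (#(f ∩ A)).choose 2 * #(f \ A)
      ≤ 2 * ((#A).choose 2 * #(V \ A) * #A) := Nat.mul_le_mul_left 2 hsum
    _ = 2 * (#A).choose 2 * (#(V \ A) * #A) := by ring
    _ ≤ #A ^ 2 * (#(V \ A) * #A) := Nat.mul_le_mul_right _ hchoose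
    _ = #A ^ 3 * #(V \ A) := by ring

lemma three_mul_sum_degree_add_card_sdiff_le (hE : E ⊆ powersetCard 4 V) (hA : A ⊆ V)
    (hcodeg : ∀ T ∈ powersetCard 3 V, #{f ∈ E | T ⊆ f} ≤ #A) (hind : ∀ f ∈ E, #(f ∩ A) < #f) :
    3 * ∑ v ∈ A, degree E v + #(E \ oddSets 4 V A) ≤ 3 * #E + #A ^ 3 * #(V \ A) := by
  have hpoint : ∀ f ∈ E, 3 * #(f ∩ A) + (if Even #(f ∩ A) then 1 else 0) ≤
      3 + 2 * ((#(f ∩ A)).choose 2 * #(f \ A)) := by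
    intro f hf
    have hlt := hind f hf
    have hf4 := (mem_powersetCard.1 (hE hf)).2
    rw [hf4] at hlt
    have hsdiff : #(f \ A) = 4 - #(f ∩ A) := by
      have := card_inter_add_card_sdiff f A
      omega
    rw [hsdiff]
    generalize #(f ∩ A) = c at hlt
    interval_cases c <;> decide
  have hsum := sum_le_sum hpoint
  rw [sum_add_distrib, sum_add_distrib, ← mul_sum, ← mul_sum, ← sum_degree,
    ← card_sdiff_oddSets_eq_sum hE, sum_const, smul_eq_mul] at hsum
  have := sum_choose_two_mul_le hE hA hcodeg
  omega

/- `A` is the neighbourhood of a triple of maximum codegree, so that no edge lies inside `A` and no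
triple has more than `#A` neighbours. -/
theorem exists_subset_odd_structure (hE : E ⊆ powersetCard 4 V) (hI : HasIndepNbhds E) {d : ℝ}
    (hd : ∀ v ∈ V, d ≤ degree E v) :
    ∃ A ⊆ V, 24 * (#E : ℝ) ≤ (#V : ℝ) ^ 3 * #A ∧
      3 * #A * d + (#(E \ oddSets 4 V A) : ℝ) ≤ 3 * #E + (#A : ℝ) ^ 3 * (#V - #A) := by
  rcases E.eq_empty_or_nonempty with rfl | ⟨f, hf⟩
  · exact ⟨∅, empty_subset V, by simp, by simp⟩
  have htriples : (powersetCard 3 V).Nonempty := by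
    obtain ⟨hfV, hf4⟩ := mem_powersetCard.1 (hE hf)
    have := card_le_card hfV
    exact powersetCard_nonempty_of_le (by omega)
  obtain ⟨T₀, hT₀, hmax⟩ := exists_max_image _ (fun T => #(nbhd E V T)) htriples
  have hcodeg : ∀ T ∈ powersetCard 3 V, #{f ∈ E | T ⊆ f} ≤ #(nbhd E V T₀) := fun T hT =>
    (card_filter_superset_eq_card_nbhd hE (mem_powersetCard.1 hT).2).trans_le (hmax T hT)
  have hA : nbhd E V T₀ ⊆ V := filter_subset _ _
  refine ⟨nbhd E V T₀, hA, by exact_mod_cast twentyfour_mul_card_le hE hcodeg, ?_⟩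
  have hmain := three_mul_sum_degree_add_card_sdiff_le hE hA hcodeg fun f hf =>
    hI.card_inter_nbhd_lt (mem_powersetCard.1 hT₀).2 hf
  have hdeg : (#(nbhd E V T₀) : ℝ) * d ≤ ∑ v ∈ nbhd E V T₀, (degree E v : ℝ) := by
    rw [← nsmul_eq_mul]
    exact card_nsmul_le_sum _ _ _ fun v hv => hd v (hA hv)
  rw [← cast_card_sdiff hA]
  have hmain' : 3 * ∑ v ∈ nbhd E V T₀, (degree E v : ℝ) + #(E \ oddSets 4 V (nbhd E V T₀)) ≤
      3 * #E + (#(nbhd E V T₀) : ℝ) ^ 3 * #(V \ nbhd E V T₀) := by exact_mod_cast hmain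
  linarith

end MaxCodegree

section Density

open Finset

variable {α : Type*} [DecidableEq α] {V A : Finset α} {E : Finset (Finset α)}

lemma exists_restrict_mul_sub_le_degree (hE : E ⊆ powersetCard 4 V) (ρ : ℝ) :
    ∃ S ⊆ V, (∀ v ∈ S, ρ * ((#S : ℝ) ^ 4 - ((#S : ℝ) - 1) ^ 4) ≤ degree (restrict E S) v) ∧
      (#E : ℝ) - ρ * (#V : ℝ) ^ 4 ≤ #(restrict E S) - ρ * (#S : ℝ) ^ 4 := by
  obtain ⟨S, hS, hmax⟩ := exists_max_image V.powerset
    (fun S => (#(restrict E S) : ℝ) - ρ * (#S : ℝ) ^ 4) ⟨V, mem_powerset_self V⟩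
  refine ⟨S, mem_powerset.1 hS, fun v hv => ?_, ?_⟩
  · have herase : (#(restrict E (S.erase v)) : ℝ) + degree (restrict E S) v = #(restrict E S) :=
      mod_cast card_restrict_erase_add_degree E S v
    have hle := hmax (S.erase v) (mem_powerset.2 ((erase_subset _ _).trans (mem_powerset.1 hS)))
    simp only [cast_card_erase_of_mem hv] at hle
    linarith
  · have := hmax V (mem_powerset_self V)
    rwa [restrict_self hE] at this

lemma exists_restrict_max_ratio {r : ℕ} (hr : 0 < r) (hE : E ⊆ powersetCard r V) {F : ℕ → ℝ}
    (hF₀ : F 0 = 0) (hF : ∀ k, 0 < k → 0 < F k) (hlt : F #V < #E) :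
    ∃ S ⊆ V, ∃ R : ℝ, 1 < R ∧ 0 < #S ∧ (#(restrict E S) : ℝ) = R * F #S ∧
      ∀ v ∈ S, R * (F #S - F (#S - 1)) ≤ degree (restrict E S) v := by
  obtain ⟨S, hS, hmax⟩ := exists_max_image V.powerset
    (fun S => (#(restrict E S) : ℝ) / F #S) ⟨V, mem_powerset_self V⟩
  have hempty : restrict E ∅ = ∅ := by
    rw [← subset_empty, ← powersetCard_eq_empty.2 (show #(∅ : Finset α) < r from hr)]
    exact restrict_subset_powersetCard hE ∅
  have hV : 0 < #V := by
    rw [card_pos, nonempty_iff_ne_empty]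
    rintro rfl
    rw [← restrict_self hE, hempty, card_empty, hF₀] at hlt
    exact lt_irrefl _ (by exact_mod_cast hlt)
  have hR : 1 < (#(restrict E S) : ℝ) / F #S := by
    have := hmax V (mem_powerset_self V)
    rw [restrict_self hE] at this
    exact ((one_lt_div (hF _ hV)).2 hlt).trans_le this
  have hSpos : 0 < #S := by
    rw [Nat.pos_iff_ne_zero]
    intro h
    rw [h, hF₀, div_zero] at hR
    linarith
  have hcard : (#(restrict E S) : ℝ) = #(restrict E S) / F #S * F #S :=
    (div_mul_cancel₀ _ (hF _ hSpos).ne').symm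
  refine ⟨S, mem_powerset.1 hS, _, hR, hSpos, hcard, fun v hv => ?_⟩
  have herase : (#(restrict E (S.erase v)) : ℝ) + degree (restrict E S) v = #(restrict E S) :=
    mod_cast card_restrict_erase_add_degree E S v
  have hle : (#(restrict E (S.erase v)) : ℝ) ≤ #(restrict E S) / F #S * F #(S.erase v) := by
    rcases (S.erase v).eq_empty_or_nonempty with h | h
    · rw [h, hempty, card_empty, card_empty, hF₀, mul_zero, Nat.cast_zero]
    · rw [← div_le_iff₀ (hF _ (card_pos.2 h))]
      exact hmax _ (mem_powerset.2 ((erase_subset _ _).trans (mem_powerset.1 hS)))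
  rw [card_erase_of_mem hv] at hle
  linarith

lemma sixteen_mul_cube_mul_sub (a s : ℝ) :
    16 * (a ^ 3 * (s - a)) = (4 * a - s) * s ^ 3 - (2 * a - s) ^ 3 * (2 * a + s) := by ring

lemma cube_mul_sub_lt {R s a : ℝ} (hR : 1 < R) (hs : 0 < s) (has : a ≤ s)
    (h24 : 24 * (R * (s ^ 4 / 48 + s ^ 3)) ≤ s ^ 3 * a) :
    a ^ 3 * (s - a) < 3 * a * (R * (s ^ 4 / 48 + s ^ 3 - ((s - 1) ^ 4 / 48 + (s - 1) ^ 3))) -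
      3 * (R * (s ^ 4 / 48 + s ^ 3)) := by
  have ha : s / 2 + 24 < a := by
    have : s ^ 3 * (s / 2 + 24) < s ^ 3 * a := by
      nlinarith [show 0 < s ^ 4 / 48 + s ^ 3 by positivity]
    exact lt_of_mul_lt_mul_left this (by positivity)
  have hdiff : s ^ 3 / 12 + 2 * s ^ 2 ≤ s ^ 4 / 48 + s ^ 3 - ((s - 1) ^ 4 / 48 + (s - 1) ^ 3) := by
    nlinarith
  set Q := a * (s ^ 4 / 48 + s ^ 3 - ((s - 1) ^ 4 / 48 + (s - 1) ^ 3)) - (s ^ 4 / 48 + s ^ 3)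
    with hQ
  have hQle : (4 * a - s) * s ^ 3 / 48 + s ^ 2 * (2 * a - s) ≤ Q := by
    have := mul_le_mul_of_nonneg_left hdiff (show 0 ≤ a by linarith)
    nlinarith
  have hmain : 0 ≤ (4 * a - s) * s ^ 3 / 48 := by
    have : 0 ≤ 4 * a - s := by linarith
    positivity
  have h2a : 0 < 2 * a - s := by linarith
  have hslack : 0 < s ^ 2 * (2 * a - s) := by positivity
  have hcube : 0 ≤ (2 * a - s) ^ 3 * (2 * a + s) := by
    have : 0 ≤ 2 * a + s := by linarith
    positivity
  have hRQ : Q < R * Q := by nlinarith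
  have hRQ' : 3 * a * (R * (s ^ 4 / 48 + s ^ 3 - ((s - 1) ^ 4 / 48 + (s - 1) ^ 3))) -
      3 * (R * (s ^ 4 / 48 + s ^ 3)) = 3 * (R * Q) := by
    rw [hQ]
    ring
  rw [hRQ']
  have := sixteen_mul_cube_mul_sub a s
  linarith

theorem HasIndepNbhds.card_le (hI : HasIndepNbhds E) (hE : E ⊆ powersetCard 4 V) :
    (#E : ℝ) ≤ (#V : ℝ) ^ 4 / 48 + (#V : ℝ) ^ 3 := by
  by_contra! hlt
  obtain ⟨S, -, R, hR, hS, hcard, hdeg⟩ := exists_restrict_max_ratio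
    (F := fun k => (k : ℝ) ^ 4 / 48 + (k : ℝ) ^ 3) four_pos hE (by simp)
    (fun k hk => by positivity) hlt
  obtain ⟨A, hAS, h24, hle⟩ := exists_subset_odd_structure (restrict_subset_powersetCard hE S)
    (hI.mono (restrict_subset E S)) hdeg
  rw [hcard] at h24 hle
  have hAle : (#A : ℝ) ≤ #S := mod_cast card_le_card hAS
  have hlt' := cube_mul_sub_lt hR (by exact_mod_cast hS) hAle h24
  rw [Nat.cast_sub hS, Nat.cast_one] at hle
  have : (0 : ℝ) ≤ #(restrict E S \ oddSets 4 S A) := Nat.cast_nonneg _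
  linarith

end Density

section Stability

open Finset

variable {α : Type*} [DecidableEq α] {V A : Finset α} {E : Finset (Finset α)}

lemma card_oddSets_four_le (hA : A ⊆ V) :
    48 * (#(oddSets 4 V A) : ℝ) ≤ (#V : ℝ) ^ 4 - (2 * #A - #V : ℝ) ^ 4 := by
  rw [card_oddSets_four, inter_eq_right.2 hA]
  push_cast
  have hchoose : ∀ k : ℕ, 6 * (k.choose 3 : ℝ) ≤ (k : ℝ) ^ 3 := fun k =>
    mod_cast factorial_mul_choose_le_pow k 3
  have hV : (#V : ℝ) = #A + #(V \ A) := by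
    rw [cast_card_sdiff hA]
    ring
  rw [hV]
  have := mul_le_mul_of_nonneg_left (hchoose #(V \ A)) (Nat.cast_nonneg (α := ℝ) #A)
  have := mul_le_mul_of_nonneg_left (hchoose #A) (Nat.cast_nonneg (α := ℝ) #(V \ A))
  linarith

lemma neg_le_cube_mul_add {a s : ℝ} (hs : 0 ≤ s) (ha : (1 / 2 - 6 / 10 ^ 12) * s ≤ a)
    (has : a ≤ s) : -(1 / 10 ^ 15 * s ^ 4) ≤ (2 * a - s) ^ 3 * (2 * a + s) := by
  have hadd : 0 ≤ 2 * a + s := by linarith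
  rcases le_total 0 (2 * a - s) with h | h
  · have : 0 ≤ (2 * a - s) ^ 3 * (2 * a + s) := by positivity
    have : 0 ≤ s ^ 4 := by positivity
    linarith
  · have hcube : (s - 2 * a) ^ 3 ≤ (12 / 10 ^ 12 * s) ^ 3 :=
      pow_le_pow_left₀ (by linarith) (by linarith) 3
    have hmul : (s - 2 * a) ^ 3 * (2 * a + s) ≤ (12 / 10 ^ 12 * s) ^ 3 * (3 * s) :=
      mul_le_mul hcube (by linarith) hadd (by positivity)
    have : 0 ≤ s ^ 4 := by positivity
    linarith

lemma stability_bounds {s a e o m b : ℝ} (hs : 10 ^ 14 ≤ s) (has : a ≤ s) (hm : 0 ≤ m)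
    (he : s * ((1 / 12 - 1 / 10 ^ 12) * s ^ 3) ≤ 4 * e) (he' : e ≤ s ^ 4 / 48 + s ^ 3)
    (h24 : 24 * e ≤ s ^ 3 * a)
    (hb : 3 * a * ((1 / 12 - 1 / 10 ^ 12) * s ^ 3) + b ≤ 3 * e + a ^ 3 * (s - a))
    (ho : 48 * o ≤ s ^ 4 - (2 * a - s) ^ 4) (hbm : e + m = o + b) :
    b ≤ 1 / 10 ^ 11 * s ^ 4 ∧ m ≤ 1 / 10 ^ 11 * s ^ 4 ∧ |2 * a - s| ≤ s / 250 := by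
  have hs₀ : 0 < s := by linarith
  have hs₃ : 0 < s ^ 3 := by positivity
  have hs₃₄ : s ^ 3 ≤ 1 / 10 ^ 14 * s ^ 4 := by
    have := mul_le_mul_of_nonneg_left hs hs₃.le
    linarith
  have ha : (1 / 2 - 6 / 10 ^ 12) * s ≤ a := by
    have : s ^ 3 * ((1 / 2 - 6 / 10 ^ 12) * s) ≤ s ^ 3 * a := by linarith
    exact le_of_mul_le_mul_left this hs₃
  have hcube := neg_le_cube_mul_add hs₀.le ha has
  have has' : s ^ 3 * a ≤ s ^ 4 := (mul_le_mul_of_nonneg_left has hs₃.le).trans_eq (by ring)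
  have := sixteen_mul_cube_mul_sub a s
  have : b ≤ 44 / 10 ^ 13 * s ^ 4 := by linarith
  have : 0 < s ^ 4 := by positivity
  have hq : 0 ≤ (2 * a - s) ^ 4 := by positivity
  refine ⟨by linarith, by linarith, ?_⟩
  have hpow : |2 * a - s| ^ 4 ≤ (s / 250) ^ 4 := by
    rw [Even.pow_abs (by decide)]
    linarith
  exact le_of_pow_le_pow_left₀ (by norm_num) (by positivity) hpow

theorem HasIndepNbhds.exists_oddSets_approx (hI : HasIndepNbhds E) (hE : E ⊆ powersetCard 4 V)
    (hV : (10 : ℝ) ^ 14 ≤ #V)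
    (hd : ∀ v ∈ V, (1 / 12 - 1 / 10 ^ 12) * (#V : ℝ) ^ 3 ≤ degree E v) :
    ∃ A ⊆ V, (#(E \ oddSets 4 V A) : ℝ) ≤ 1 / 10 ^ 11 * (#V : ℝ) ^ 4 ∧
      (#(oddSets 4 V A \ E) : ℝ) ≤ 1 / 10 ^ 11 * (#V : ℝ) ^ 4 ∧
      |2 * (#A : ℝ) - #V| ≤ #V / 250 := by
  have hsum : (#V : ℝ) * ((1 / 12 - 1 / 10 ^ 12) * (#V : ℝ) ^ 3) ≤ 4 * #E := by
    have hdeg : ∑ v ∈ V, (degree E v : ℝ) = 4 * #E := mod_cast sum_degree_of_subset_powersetCard hE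
    rw [← hdeg, ← nsmul_eq_mul]
    exact card_nsmul_le_sum _ _ _ hd
  obtain ⟨A, hA, h24, hb⟩ := exists_subset_odd_structure hE hI hd
  exact ⟨A, hA, stability_bounds hV (by exact_mod_cast card_le_card hA) (Nat.cast_nonneg _) hsum
    (hI.card_le hE) h24 hb (card_oddSets_four_le hA)
    (by exact_mod_cast card_add_card_sdiff_comm E (oddSets 4 V A))⟩

end Stability

section Link

open Finset

variable {α : Type*} [DecidableEq α] {V W A A' B T X : Finset α} {E O : Finset (Finset α)} {v : α}

/-- The link of the vertex `v` in `W`: the triples in `W` that form an edge together with `v`. -/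
def link (E : Finset (Finset α)) (W : Finset α) (v : α) : Finset (Finset α) :=
  {T ∈ powersetCard 3 W | insert v T ∈ E}

/-- The members of the link of `v` that meet `A` in an odd number of points. Those meeting `A` in an
even number of points form `oddLink E W (W \ A) v`. -/
def oddLink (E : Finset (Finset α)) (W A : Finset α) (v : α) : Finset (Finset α) :=
  {T ∈ link E W v | Odd #(T ∩ A)}

lemma odd_card_inter_sdiff (hT : T ⊆ W) (hT₃ : #T = 3) :
    Odd #(T ∩ (W \ A)) ↔ Even #(T ∩ A) := by
  have := card_inter_sdiff_right hT A
  rw [Nat.odd_iff, Nat.even_iff]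
  omega

lemma oddLink_subset_oddSets : oddLink E W A v ⊆ oddSets 3 W A :=
  filter_subset_filter _ (filter_subset _ _)

lemma oddLink_sdiff : oddLink E W (W \ A) v = {T ∈ link E W v | Even #(T ∩ A)} := by
  refine filter_congr fun T hT => ?_
  obtain ⟨hTW, hT₃⟩ := mem_powersetCard.1 (mem_filter.1 hT).1
  exact odd_card_inter_sdiff hTW hT₃

lemma card_oddLink_add_card_oddLink_sdiff :
    #(oddLink E W A v) + #(oddLink E W (W \ A) v) = #(link E W v) := by
  rw [oddLink_sdiff, oddLink]
  simp only [← Nat.not_odd_iff_even]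
  exact card_filter_add_card_filter_not _

lemma degree_eq_card_link (hE : E ⊆ powersetCard 4 V) (v : α) : degree E v = #(link E V v) := by
  have hv : ∀ T ∈ link E V v, v ∉ T := by
    intro T hT hvT
    obtain ⟨hT₃, hTE⟩ := mem_filter.1 hT
    rw [insert_eq_of_mem hvT] at hTE
    have := (mem_powersetCard.1 hT₃).2
    have := (mem_powersetCard.1 (hE hTE)).2
    omega
  refine (card_nbij' (insert v) (fun f => f.erase v) ?_ ?_ ?_ ?_).symm
  · exact fun T hT => mem_filter.2 ⟨(mem_filter.1 hT).2, mem_insert_self v T⟩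
  · intro f hf
    obtain ⟨hfE, hvf⟩ := mem_filter.1 hf
    obtain ⟨hfV, hf₄⟩ := mem_powersetCard.1 (hE hfE)
    refine mem_filter.2 ⟨mem_powersetCard.2 ⟨(erase_subset _ _).trans hfV, ?_⟩, ?_⟩
    · rw [card_erase_of_mem hvf, hf₄]
    · rwa [insert_erase hvf]
  · exact fun T hT => erase_insert (hv T hT)
  · exact fun f hf => insert_erase (mem_filter.1 hf).2

lemma card_filter_insert_notMem_le (hO : ∀ w ∈ B \ T, insert w T ∈ O) :
    #{w ∈ B | insert w T ∉ E} ≤ #{q ∈ O \ E | T ⊆ q} + #T := by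
  have hsub : {w ∈ B | insert w T ∉ E} ⊆ {w ∈ B \ T | insert w T ∉ E} ∪ T := by
    intro w hw
    obtain ⟨hwB, hwE⟩ := mem_filter.1 hw
    by_cases hwT : w ∈ T
    · exact mem_union_right _ hwT
    · exact mem_union_left _ (mem_filter.2 ⟨Finset.mem_sdiff.2 ⟨hwB, hwT⟩, hwE⟩)
  refine (card_le_card hsub).trans ((card_union_le _ _).trans (Nat.add_le_add_right ?_ _))
  refine card_le_card_of_injOn (fun w => insert w T) ?_ ?_
  · intro w hw
    obtain ⟨hwB, hwE⟩ := mem_filter.1 hw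
    exact mem_filter.2 ⟨Finset.mem_sdiff.2 ⟨hO w hwB, hwE⟩, subset_insert _ _⟩
  · intro w hw w' _ h
    have hwT : w ∉ T := (Finset.mem_sdiff.1 (mem_filter.1 hw).1).2
    have hw' : w ∈ insert w' T := (show insert w T = insert w' T from h) ▸ mem_insert_self w T
    exact (mem_insert.1 hw').resolve_right hwT

lemma sum_card_filter_insert_notMem_le {L : Finset (Finset α)} (hL : L ⊆ oddSets 3 W A) :
    ∑ T ∈ L, #{w ∈ W \ A | insert w T ∉ E} ≤ 4 * #(oddSets 4 W A \ E) + 3 * #L := by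
  have hcard : ∀ T ∈ L, #T = 3 := fun T hT => (mem_powersetCard.1 (mem_filter.1 (hL hT)).1).2
  have hterm : ∀ T ∈ L, #{w ∈ W \ A | insert w T ∉ E} ≤
      #{q ∈ oddSets 4 W A \ E | T ⊆ q} + 3 := by
    intro T hT
    obtain ⟨hTW, hodd⟩ := mem_filter.1 (hL hT)
    rw [mem_powersetCard] at hTW
    refine (card_filter_insert_notMem_le fun w hw => ?_).trans_eq (by rw [hTW.2])
    obtain ⟨hwWA, hwT⟩ := Finset.mem_sdiff.1 hw
    obtain ⟨hwW, hwA⟩ := Finset.mem_sdiff.1 hwWA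
    refine mem_filter.2 ⟨mem_powersetCard.2 ⟨insert_subset hwW hTW.1, ?_⟩, ?_⟩
    · rw [card_insert_of_notMem hwT, hTW.2]
    · rwa [insert_inter_of_notMem hwA]
  have hsum : ∑ T ∈ L, #{q ∈ oddSets 4 W A \ E | T ⊆ q} ≤
      Nat.choose 4 3 * #(oddSets 4 W A \ E) :=
    sum_card_filter_superset_le hcard fun q hq =>
      (mem_powersetCard.1 (oddSets_subset (Finset.mem_sdiff.1 hq).1)).2
  refine (sum_le_sum hterm).trans ?_
  rw [sum_add_distrib, sum_const, smul_eq_mul, mul_comm #L]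
  exact Nat.add_le_add_right hsum _

lemma HasIndepNbhds.card_filter_link_subset_le (hI : HasIndepNbhds E) (hT : #T = 3)
    (hv : insert v T ∈ E) (B : Finset α) :
    #{R ∈ link E W v | R ⊆ B} ≤ #{w ∈ B | insert w T ∉ E} * #W ^ 2 := by
  refine le_trans (card_le_card fun R hR => ?_)
    (card_filter_not_disjoint_powersetCard_three_le W {w ∈ B | insert w T ∉ E})
  obtain ⟨hRlink, hRB⟩ := mem_filter.1 hR
  obtain ⟨hRW, hvR⟩ := mem_filter.1 hRlink
  obtain ⟨w, hw, hwT⟩ := hI T (insert v R) hT hvR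
  have hwR : w ∈ R := (mem_insert.1 hw).resolve_left fun h => hwT (h ▸ hv)
  exact mem_filter.2 ⟨hRW, not_disjoint_iff.2 ⟨w, hwR, mem_filter.2 ⟨hRB hwR, hwT⟩⟩⟩

lemma HasIndepNbhds.oddSets_subset_sdiff (hI : HasIndepNbhds E) (hT : #T = 3) (hX : X ⊆ V)
    (h : ∀ w ∈ X, insert w T ∈ E) : oddSets 4 X A ⊆ oddSets 4 V A \ E := by
  intro q hq
  refine Finset.mem_sdiff.2 ⟨filter_subset_filter _ (powersetCard_mono hX) hq, fun hqE => ?_⟩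
  obtain ⟨w, hwq, hw⟩ := hI T q hT hqE
  exact hw (h w ((mem_powersetCard.1 (oddSets_subset hq)).1 hwq))

lemma card_oddLink_le_add {D : Finset α} (h : ∀ x ∈ W, x ∉ D → (x ∈ A ↔ x ∈ A')) :
    #(oddLink E W A' v) ≤ #(oddLink E W A v) + #D * #W ^ 2 := by
  have hsub : oddLink E W A' v ⊆
      oddLink E W A v ∪ {T ∈ powersetCard 3 W | ¬ Disjoint T D} := by
    intro T hT
    obtain ⟨hlink, hodd⟩ := mem_filter.1 hT
    have hTW := (mem_filter.1 hlink).1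
    by_cases hTD : Disjoint T D
    · have hinter : T ∩ A = T ∩ A' := by
        ext x
        simp only [mem_inter]
        exact and_congr_right fun hx =>
          h x ((mem_powersetCard.1 hTW).1 hx) (disjoint_left.1 hTD hx)
      exact mem_union_left _ (mem_filter.2 ⟨hlink, hinter ▸ hodd⟩)
    · exact mem_union_right _ (mem_filter.2 ⟨hTW, hTD⟩)
  exact (card_le_card hsub).trans ((card_union_le _ _).trans
    (Nat.add_le_add_left (card_filter_not_disjoint_powersetCard_three_le W D) _))

lemma degree_sdiff_oddSets_of_notMem (hE : E ⊆ powersetCard 4 V) (hv : v ∉ A) :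
    degree (E \ oddSets 4 V A) v = #(oddLink E V (V \ A) v) := by
  rw [degree_eq_card_link (sdiff_subset.trans hE), oddLink_sdiff, sdiff_oddSets hE]
  simp only [link, mem_filter, filter_filter, insert_inter_of_notMem hv]

lemma degree_sdiff_oddSets_of_mem (hE : E ⊆ powersetCard 4 V) (hA : A ⊆ V) (hv : v ∈ A) :
    degree (E \ oddSets 4 V A) v = #(oddLink E V A v) := by
  rw [← oddSets_four_sdiff, degree_sdiff_oddSets_of_notMem hE (notMem_sdiff_of_mem_right hv),
    Finset.sdiff_sdiff_eq_self hA]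

end Link

section NearOdd

open Finset

variable {α : Type*} [DecidableEq α] {V W A T : Finset α} {E L : Finset (Finset α)} {v : α}

/-- The `4`-graph `E`, which may have edges outside `W`, contains all but few of the quadruples in
`W` that meet `A` in an odd number of points, and `A` is nearly half of the large set `W`. -/
structure IsNearOdd (E : Finset (Finset α)) (W A : Finset α) : Prop where
  subset : A ⊆ W
  le_card : (10 : ℝ) ^ 14 ≤ #W
  card_eq_four : ∀ f ∈ E, #f = 4
  card_sdiff_le : (#(oddSets 4 W A \ E) : ℝ) ≤ 1 / 10 ^ 11 * (#W : ℝ) ^ 4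
  abs_le : |2 * (#A : ℝ) - #W| ≤ #W / 200

lemma abs_two_mul_card_sdiff_sub (hA : A ⊆ V) :
    |2 * (#(V \ A) : ℝ) - #V| = |2 * (#A : ℝ) - #V| := by
  rw [cast_card_sdiff hA, abs_sub_comm]
  ring_nf

lemma IsNearOdd.sdiff (h : IsNearOdd E W A) : IsNearOdd E W (W \ A) where
  subset := sdiff_subset
  le_card := h.le_card
  card_eq_four := h.card_eq_four
  card_sdiff_le := by rw [oddSets_four_sdiff]; exact h.card_sdiff_le
  abs_le := by rw [abs_two_mul_card_sdiff_sub h.subset]; exact h.abs_le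

lemma mul_lt_mul_of_large {s l m : ℝ} (hs : 10 ^ 14 ≤ s) (hm : m ≤ 1 / 10 ^ 11 * s ^ 4)
    (hl : 1 / 10 ^ 5 * s ^ 3 < l) : 4 * m + 3 * l < l * (5 / 10 ^ 6 * s) := by
  have hs₀ : 0 < s := by linarith
  have hl₀ : 0 < l := lt_trans (by positivity) hl
  have hls : 1 / 10 ^ 5 * s ^ 3 * s < l * s := mul_lt_mul_of_pos_right hl hs₀
  have hl₃ : l * 10 ^ 14 ≤ l * s := mul_le_mul_of_nonneg_left hs hl₀.le
  linarith

lemma IsNearOdd.exists_card_filter_insert_notMem_le (h : IsNearOdd E W A)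
    (hL : L ⊆ oddSets 3 W A) (hlarge : 1 / 10 ^ 5 * (#W : ℝ) ^ 3 < #L) :
    ∃ T ∈ L, (#{w ∈ W \ A | insert w T ∉ E} : ℝ) ≤ 5 / 10 ^ 6 * #W := by
  by_contra! hcon
  have hlower : (#L : ℝ) * (5 / 10 ^ 6 * #W) ≤ ∑ T ∈ L, (#{w ∈ W \ A | insert w T ∉ E} : ℝ) := by
    rw [← nsmul_eq_mul]
    exact card_nsmul_le_sum _ _ _ fun T hT => (hcon T hT).le
  have hupper : ∑ T ∈ L, (#{w ∈ W \ A | insert w T ∉ E} : ℝ) ≤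
      4 * #(oddSets 4 W A \ E) + 3 * #L := by
    exact_mod_cast sum_card_filter_insert_notMem_le (E := E) hL
  exact (mul_lt_mul_of_large h.le_card h.card_sdiff_le hlarge).not_ge (hlower.trans hupper)

lemma IsNearOdd.card_filter_link_subset_sdiff_le (h : IsNearOdd E W A) (hI : HasIndepNbhds E)
    (hv : 1 / 10 ^ 5 * (#W : ℝ) ^ 3 < #(oddLink E W A v)) :
    (#{R ∈ link E W v | R ⊆ W \ A} : ℝ) ≤ 1 / 10 ^ 5 * (#W : ℝ) ^ 3 := by
  obtain ⟨T, hT, hTle⟩ := h.exists_card_filter_insert_notMem_le oddLink_subset_oddSets hv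
  obtain ⟨hT₃, hvT⟩ := mem_filter.1 (mem_filter.1 hT).1
  have hcard : (#{R ∈ link E W v | R ⊆ W \ A} : ℝ) ≤
      #{w ∈ W \ A | insert w T ∉ E} * (#W : ℝ) ^ 2 := by
    exact_mod_cast hI.card_filter_link_subset_le (W := W) (mem_powersetCard.1 hT₃).2 hvT (W \ A)
  have hmul := mul_le_mul_of_nonneg_right hTle (sq_nonneg (#W : ℝ))
  have : (0 : ℝ) ≤ (#W : ℝ) ^ 3 := by positivity
  linarith

lemma add_le_of_mul_choose_three_le {p q a s : ℝ} (hs : 10 ^ 14 ≤ s) (ha : |2 * a - s| ≤ s / 200)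
    (hp : p ≤ a) (hq : q ≤ s - a) (h : p * (p - 1) * (p - 2) / 6 * q ≤ 1 / 10 ^ 11 * s ^ 4) :
    p + q ≤ 53 / 100 * s := by
  obtain ⟨ha₁, ha₂⟩ := abs_le.1 ha
  by_contra! hlt
  have : s / 50 ≤ p := by linarith
  have hq' : s / 50 ≤ q := by linarith
  have hcube : s / 100 * (s / 100) * (s / 100) ≤ p * (p - 1) * (p - 2) := by
    gcongr <;> nlinarith
  have : 0 < s := by linarith
  have hpos : 0 < s / 100 * (s / 100) * (s / 100) := by positivity
  have hquart : s / 100 * (s / 100) * (s / 100) / 6 * (s / 50) ≤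
      p * (p - 1) * (p - 2) / 6 * q :=
    mul_le_mul (by linarith) hq' (by positivity) (by linarith)
  have : 0 < s ^ 4 := by positivity
  linarith

lemma IsNearOdd.card_nbhd_le (h : IsNearOdd E W A) (hI : HasIndepNbhds E) (hT : #T ≤ 3) :
    (#(nbhd E W T) : ℝ) ≤ 53 / 100 * #W := by
  rcases hT.lt_or_eq with hT | hT
  · have hempty : nbhd E W T = ∅ := by
      refine filter_false_of_mem fun w _ hw => ?_
      have := h.card_eq_four _ hw
      have := card_insert_le w T
      omega
    rw [hempty, card_empty, Nat.cast_zero]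
    positivity
  have hXW : nbhd E W T ⊆ W := filter_subset _ _
  have hcard := card_le_card (hI.oddSets_subset_sdiff (A := A) hT hXW fun w hw =>
    (mem_filter.1 hw).2)
  rw [card_oddSets_four] at hcard
  have hmul : (((#(nbhd E W T ∩ A)).choose 3 : ℕ) : ℝ) * #(nbhd E W T \ A) ≤
      1 / 10 ^ 11 * (#W : ℝ) ^ 4 :=
    le_trans (by exact_mod_cast (Nat.le_add_left _ _).trans hcard) h.card_sdiff_le
  rw [cast_choose_three] at hmul
  have hp : (#(nbhd E W T ∩ A) : ℝ) ≤ #A := mod_cast card_le_card inter_subset_right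
  have hq : (#(nbhd E W T \ A) : ℝ) ≤ #W - #A := by
    rw [← cast_card_sdiff h.subset]
    exact_mod_cast card_le_card (sdiff_subset_sdiff hXW le_rfl)
  rw [← card_inter_add_card_sdiff (nbhd E W T) A, Nat.cast_add]
  exact add_le_of_mul_choose_three_le h.le_card h.abs_le hp hq hmul

lemma card_filter_link_mem_le {a b : α} (hab : a ≠ b) :
    #{T ∈ link E W v | a ∈ T ∧ b ∈ T} ≤ #(nbhd E W {v, a, b}) := by
  have hsub : {T ∈ link E W v | a ∈ T ∧ b ∈ T} ⊆
      (nbhd E W {v, a, b}).image fun w => {w, a, b} := by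
    intro T hT
    obtain ⟨hlink, haT, hbT⟩ := mem_filter.1 hT
    obtain ⟨hTW, hvT⟩ := mem_filter.1 hlink
    rw [mem_powersetCard] at hTW
    obtain ⟨w, _, hw⟩ := exists_eq_insert_iff.2
      ⟨insert_subset haT (singleton_subset_iff.2 hbT), by rw [card_pair hab, hTW.2]⟩
    refine mem_image.2 ⟨w, mem_filter.2 ⟨hTW.1 (hw ▸ mem_insert_self _ _), ?_⟩, hw⟩
    rwa [insert_comm, hw]
  exact (card_le_card hsub).trans card_image_le

lemma two_mul_card_filter_link_le {d : ℝ} (hd : ∀ a ∈ A, ∀ b ∈ W \ A,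
    (#(nbhd E W {v, a, b}) : ℝ) ≤ d) :
    2 * (#{T ∈ link E W v | #(T ∩ A) = 1 ∨ #(T ∩ A) = 2} : ℝ) ≤ #A * #(W \ A) * d := by
  set M := {T ∈ link E W v | #(T ∩ A) = 1 ∨ #(T ∩ A) = 2}
  have hpairs : ∀ T ∈ M, #{p ∈ A ×ˢ (W \ A) | p.1 ∈ T ∧ p.2 ∈ T} = 2 := by
    intro T hT
    obtain ⟨hlink, hTA⟩ := mem_filter.1 hT
    obtain ⟨hTW, hT₃⟩ := mem_powersetCard.1 (mem_filter.1 hlink).1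
    have hprod : {p ∈ A ×ˢ (W \ A) | p.1 ∈ T ∧ p.2 ∈ T} = (T ∩ A) ×ˢ (T ∩ (W \ A)) := by
      ext ⟨a, b⟩
      simp only [mem_filter, mem_product, mem_inter]
      tauto
    have := card_inter_sdiff_right hTW A
    rw [hT₃] at this
    rw [hprod, card_product]
    rcases hTA with hTA | hTA <;> rw [hTA] at this ⊢ <;> omega
  have hcodeg : ∀ p ∈ A ×ˢ (W \ A), (#{T ∈ M | p.1 ∈ T ∧ p.2 ∈ T} : ℝ) ≤ d := by
    rintro ⟨a, b⟩ hp
    obtain ⟨ha, hb⟩ := mem_product.1 hp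
    have hab : a ≠ b := fun h => (Finset.mem_sdiff.1 hb).2 (h ▸ ha)
    refine le_trans ?_ (hd a ha b hb)
    exact_mod_cast (card_le_card (filter_subset_filter _ (filter_subset _ _))).trans
      (card_filter_link_mem_le hab)
  have hcount : 2 * (#M : ℝ) = ∑ p ∈ A ×ˢ (W \ A), (#{T ∈ M | p.1 ∈ T ∧ p.2 ∈ T} : ℝ) := by
    rw [mul_comm]
    exact_mod_cast (sum_const_nat hpairs).symm.trans (sum_card_filter_comm _ _ _)
  rw [hcount, ← Nat.cast_mul, ← card_product, ← nsmul_eq_mul]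
  exact sum_le_card_nsmul _ _ _ hcodeg

lemma card_link_le_add (A : Finset α) :
    #(link E W v) ≤ #{T ∈ link E W v | T ⊆ W \ A} + #{T ∈ link E W v | T ⊆ A} +
      #{T ∈ link E W v | #(T ∩ A) = 1 ∨ #(T ∩ A) = 2} := by
  have hsub : link E W v ⊆ ({T ∈ link E W v | T ⊆ W \ A} ∪ {T ∈ link E W v | T ⊆ A}) ∪
      {T ∈ link E W v | #(T ∩ A) = 1 ∨ #(T ∩ A) = 2} := by
    intro T hT
    obtain ⟨hTW, hT₃⟩ := mem_powersetCard.1 (mem_filter.1 hT).1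
    have hle : #(T ∩ A) ≤ 3 := hT₃ ▸ card_le_card inter_subset_left
    simp only [mem_union, mem_filter, hT, true_and]
    obtain h | h | h : #(T ∩ A) = 0 ∨ #(T ∩ A) = 3 ∨ (#(T ∩ A) = 1 ∨ #(T ∩ A) = 2) := by omega
    · exact Or.inl (Or.inl (subset_sdiff.2
        ⟨hTW, disjoint_iff_inter_eq_empty.2 (card_eq_zero.1 h)⟩))
    · exact Or.inl (Or.inr (inter_eq_left.1
        (eq_of_subset_of_card_le inter_subset_left (hT₃.trans h.symm).le)))
    · exact Or.inr h
  exact (card_le_card hsub).trans ((card_union_le _ _).trans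
    (Nat.add_le_add_right (card_union_le _ _) _))

theorem IsNearOdd.card_link_trichotomy (h : IsNearOdd E W A) (hI : HasIndepNbhds E) (v : α) :
    (#(oddLink E W A v) : ℝ) ≤ 1 / 10 ^ 5 * (#W : ℝ) ^ 3 ∨
    (#(oddLink E W (W \ A) v) : ℝ) ≤ 1 / 10 ^ 5 * (#W : ℝ) ^ 3 ∨
    (#(link E W v) : ℝ) ≤ (#W : ℝ) ^ 3 / 15 := by
  refine or_iff_not_imp_left.2 fun hodd => or_iff_not_imp_left.2 fun heven => ?_
  have houtside := h.card_filter_link_subset_sdiff_le hI (not_le.1 hodd)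
  have hinside := h.sdiff.card_filter_link_subset_sdiff_le hI (not_le.1 heven)
  rw [Finset.sdiff_sdiff_eq_self h.subset] at hinside
  have hmixed := two_mul_card_filter_link_le (E := E) (W := W) (A := A) (v := v)
    fun a _ b _ => h.card_nbhd_le hI (T := {v, a, b}) card_le_three
  have hAM : (#A : ℝ) * #(W \ A) * (53 / 100 * #W) ≤ (#W : ℝ) ^ 2 / 4 * (53 / 100 * #W) := by
    gcongr
    rw [cast_card_sdiff h.subset]
    linarith [sq_nonneg (2 * (#A : ℝ) - #W)]
  have hsum : (#(link E W v) : ℝ) ≤ #{T ∈ link E W v | T ⊆ W \ A} + #{T ∈ link E W v | T ⊆ A} +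
      #{T ∈ link E W v | #(T ∩ A) = 1 ∨ #(T ∩ A) = 2} := by exact_mod_cast card_link_le_add A
  have : (0 : ℝ) ≤ (#W : ℝ) ^ 3 := by positivity
  linarith

lemma card_oddSets_three_le (hA : A ⊆ V) (habs : |2 * (#A : ℝ) - #V| ≤ #V / 200) :
    (#(oddSets 3 V A) : ℝ) ≤ (1 / 12 + 1 / 10 ^ 6) * (#V : ℝ) ^ 3 := by
  rw [card_oddSets_three, inter_eq_right.2 hA]
  push_cast
  have hchoose₂ : 2 * ((#(V \ A)).choose 2 : ℝ) ≤ (#V - #A : ℝ) ^ 2 := by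
    rw [← cast_card_sdiff hA]
    exact_mod_cast factorial_mul_choose_le_pow #(V \ A) 2
  have hchoose₃ : 6 * ((#A).choose 3 : ℝ) ≤ (#A : ℝ) ^ 3 := by
    exact_mod_cast factorial_mul_choose_le_pow #A 3
  have hmul := mul_le_mul_of_nonneg_left hchoose₂ (Nat.cast_nonneg (α := ℝ) #A)
  have hcube : (2 * #A - #V : ℝ) ^ 3 ≤ (#V / 200 : ℝ) ^ 3 :=
    (le_abs_self _).trans (abs_pow (2 * #A - #V : ℝ) 3 ▸ pow_le_pow_left₀ (abs_nonneg _) habs 3)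
  have : (0 : ℝ) ≤ (#V : ℝ) ^ 3 := by positivity
  linarith

end NearOdd

section Shadow

open Finset

variable {α : Type*} [DecidableEq α] {Z : Finset (Finset α)} {r k : ℕ}

lemma shadow_image_subset {β : Type*} [DecidableEq β] {e : α → β}
    (he : Set.InjOn e (Z.sup id : Finset α)) :
    (Z.image (image e)).shadow ⊆ Z.shadow.image (image e) := by
  intro g hg
  obtain ⟨f', hf', y, hy, rfl⟩ := mem_shadow_iff.1 hg
  obtain ⟨f, hf, rfl⟩ := mem_image.1 hf'
  obtain ⟨x, hx, rfl⟩ := mem_image.1 hy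
  have hfU : f ⊆ Z.sup id := le_sup (f := id) hf
  refine mem_image.2 ⟨f.erase x, erase_mem_shadow hf hx, ?_⟩
  rw [erase_eq, erase_eq, image_sdiff_of_injOn (he.mono (coe_subset.2 hfU))
    (singleton_subset_iff.2 hx), image_singleton]

lemma choose_le_card_shadow (hZ : ∀ f ∈ Z, #f = r + 1) (hk : r + 1 ≤ k)
    (hc : k.choose (r + 1) ≤ #Z) : k.choose r ≤ #Z.shadow := by
  set U := Z.sup id
  have hU : ∀ f ∈ Z, f ⊆ U := fun f hf => le_sup (f := id) hf
  have : NeZero (k + #U) := ⟨by omega⟩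
  obtain ⟨e, he⟩ : ∃ e : α → Fin (k + #U), Set.InjOn e U := by
    rw [Set.exists_injOn_iff_injective]
    obtain ⟨e⟩ := Function.Embedding.nonempty_of_card_le (α := U) (β := Fin (k + #U)) (by simp)
    exact ⟨e, e.injective⟩
  have hcard : #(Z.image (image e)) = #Z :=
    card_image_of_injOn ((image_injOn_powerset_of_injOn he).mono fun f hf =>
      mem_powerset.2 (hU f hf))
  have hsized : ((Z.image (image e) : Finset _) : Set (Finset (Fin (k + #U)))).Sized (r + 1) := by
    intro g hg
    obtain ⟨f, hf, rfl⟩ := mem_image.1 (mem_coe.1 hg)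
    rw [card_image_of_injOn (he.mono (coe_subset.2 (hU f hf))), hZ f hf]
  calc k.choose r ≤ #(Z.image (image e)).shadow := by
        simpa using kruskal_katona_lovasz_form (i := 1) (by omega) hk (by omega) hsized
          (hcard ▸ hc)
    _ ≤ #(Z.shadow.image (image e)) := card_le_card (shadow_image_subset he)
    _ ≤ #Z.shadow := card_image_le

lemma exists_choose_le_lt_choose {m : ℕ} (hm : 0 < m) (r : ℕ) :
    ∃ k : ℕ, r + 1 ≤ k ∧ k.choose (r + 1) ≤ m ∧ m < (k + 1).choose (r + 1) := by
  have hex : ∃ k : ℕ, m < k.choose (r + 1) := by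
    refine ⟨m + (r + 1), ?_⟩
    calc m < (m + 1).choose m := by simp
      _ ≤ (m + (r + 1)).choose m := Nat.choose_le_choose _ (by omega)
      _ = (m + (r + 1)).choose (r + 1) := Nat.choose_symm_add
  obtain ⟨k, hk⟩ : ∃ k, Nat.find hex = k + 1 := by
    refine Nat.exists_eq_succ_of_ne_zero fun h => ?_
    simpa [h] using Nat.find_spec hex
  have hlt : m < (k + 1).choose (r + 1) := hk ▸ Nat.find_spec hex
  refine ⟨k, ?_, not_lt.1 (Nat.find_min hex (by omega)), hlt⟩
  by_contra! hkr
  have := Nat.choose_le_choose (r + 1) (by omega : k + 1 ≤ r + 1)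
  rw [Nat.choose_self] at this
  omega

lemma exists_mul_card_lt_mul_card_shadow (hZ : ∀ f ∈ Z, #f = r + 1) (hne : Z.Nonempty) :
    ∃ k, k.choose (r + 1) ≤ #Z ∧ (r + 1) * #Z < (k + 1) * #Z.shadow := by
  obtain ⟨k, hk, hle, hlt⟩ := exists_choose_le_lt_choose hne.card_pos r
  refine ⟨k, hle, ?_⟩
  calc (r + 1) * #Z < (r + 1) * (k + 1).choose (r + 1) := Nat.mul_lt_mul_of_pos_left hlt r.succ_pos
    _ = (k + 1) * k.choose r := by rw [Nat.add_one_mul_choose_eq, mul_comm]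
    _ ≤ (k + 1) * #Z.shadow := Nat.mul_le_mul_left _ (choose_le_card_shadow hZ hk hle)

lemma four_mul_card_lt_mul_card_shadow (hZ : ∀ f ∈ Z, #f = 4) (hne : Z.Nonempty) {s : ℝ}
    (hs : 10 ^ 14 ≤ s) (hc : (#Z : ℝ) ≤ 1 / 10 ^ 5 * s ^ 4) :
    4 * (#Z : ℝ) < 2 / 5 * s * #Z.shadow := by
  obtain ⟨k, hk, hlt⟩ := exists_mul_card_lt_mul_card_shadow hZ hne
  have hpow : (((k + 1 - 4 : ℕ) : ℝ)) ^ 4 ≤ (s / 8) ^ 4 := by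
    have hdesc := (Nat.pow_sub_le_descFactorial k 4).trans_eq
      (Nat.descFactorial_eq_factorial_mul_choose k 4)
    have : (((k + 1 - 4 : ℕ) : ℝ)) ^ 4 ≤ 24 * #Z :=
      mod_cast hdesc.trans (Nat.mul_le_mul_left _ hk)
    linarith [show 0 ≤ s ^ 4 by positivity, show (s / 8) ^ 4 = s ^ 4 / 4096 by ring]
  have hk' : ((k + 1 : ℕ) : ℝ) ≤ 2 / 5 * s := by
    have hsub : ((k + 1 : ℕ) : ℝ) ≤ ((k + 1 - 4 : ℕ) : ℝ) + 4 := mod_cast (by omega)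
    have := le_of_pow_le_pow_left₀ (by norm_num) (by linarith : 0 ≤ s / 8) hpow
    linarith
  calc 4 * (#Z : ℝ) < (k + 1 : ℕ) * #Z.shadow := mod_cast hlt
    _ ≤ 2 / 5 * s * #Z.shadow := by gcongr

end Shadow

section Core

open Finset

variable {α : Type*} [DecidableEq α] {V A D T : Finset α} {E Z : Finset (Finset α)} {v : α}

lemma degree_add_degree_sdiff_comm (E O : Finset (Finset α)) (v : α) :
    degree E v + degree (O \ E) v = degree O v + degree (E \ O) v := by
  have hfilter : ∀ X Y : Finset (Finset α),
      {f ∈ X \ Y | v ∈ f} = {f ∈ X | v ∈ f} \ {f ∈ Y | v ∈ f} := by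
    grind
  simp only [degree, hfilter]
  exact card_add_card_sdiff_comm _ _

lemma card_mul_le_of_le_degree {r : ℕ} {d : ℝ} (hZ : Z ⊆ powersetCard r V) (hD : D ⊆ V)
    (hd : ∀ v ∈ D, d ≤ degree Z v) : #D * d ≤ r * #Z := by
  calc #D * d ≤ ∑ v ∈ D, (degree Z v : ℝ) := by
        rw [← nsmul_eq_mul]
        exact card_nsmul_le_sum _ _ _ hd
    _ ≤ ∑ v ∈ V, (degree Z v : ℝ) :=
        sum_le_sum_of_subset_of_nonneg hD fun _ _ _ => Nat.cast_nonneg _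
    _ = r * #Z := mod_cast sum_degree_of_subset_powersetCard hZ

lemma exists_oddSets_eq_notMem (hA : A ⊆ V) (v : α) :
    ∃ B ⊆ V, v ∉ B ∧ oddSets 4 V B = oddSets 4 V A ∧ |2 * (#B : ℝ) - #V| = |2 * (#A : ℝ) - #V| := by
  by_cases hv : v ∈ A
  · exact ⟨V \ A, sdiff_subset, notMem_sdiff_of_mem_right hv, oddSets_four_sdiff V A,
      abs_two_mul_card_sdiff_sub hA⟩
  · exact ⟨A, hA, hv, rfl, rfl⟩

lemma degree_oddSets_four_le (hA : A ⊆ V) (habs : |2 * (#A : ℝ) - #V| ≤ #V / 200) (v : α) :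
    (degree (oddSets 4 V A) v : ℝ) ≤ (1 / 12 + 1 / 10 ^ 6) * (#V : ℝ) ^ 3 := by
  obtain ⟨B, hB, hv, hBA, habsB⟩ := exists_oddSets_eq_notMem hA v
  rw [← hBA, degree_eq_card_link oddSets_subset]
  refine le_trans (Nat.cast_le.2 (card_le_card fun T hT => ?_))
    (card_oddSets_three_le hB (habsB.trans_le habs))
  obtain ⟨hT₃, hTodd⟩ := mem_filter.1 hT
  refine mem_filter.2 ⟨hT₃, ?_⟩
  rw [← insert_inter_of_notMem hv]
  exact (mem_filter.1 hTodd).2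

lemma degree_oddSets_sdiff_le (hA : A ⊆ V) (habs : |2 * (#A : ℝ) - #V| ≤ #V / 200)
    (hd : (1 / 12 - 1 / 10 ^ 12) * (#V : ℝ) ^ 3 ≤ degree E v)
    (hbad : (degree (E \ oddSets 4 V A) v : ℝ) ≤ 11 / 10 ^ 6 * (#V : ℝ) ^ 3) :
    (degree (oddSets 4 V A \ E) v : ℝ) ≤ 2 / 10 ^ 5 * (#V : ℝ) ^ 3 := by
  have hle := degree_oddSets_four_le hA habs v
  have hcomm : (degree E v : ℝ) + degree (oddSets 4 V A \ E) v =
    degree (oddSets 4 V A) v + degree (E \ oddSets 4 V A) v :=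
    mod_cast degree_add_degree_sdiff_comm E (oddSets 4 V A) v
  linarith [show 0 ≤ (#V : ℝ) ^ 3 by positivity]

lemma choose_three_le_degree_sdiff (hI : HasIndepNbhds E) (hA : A ⊆ V) (hv : v ∈ V)
    (hvA : v ∉ A) (hT : #T = 3) (hTv : insert v T ∈ E) :
    (#{w ∈ A | insert w T ∈ E}).choose 3 ≤ degree (oddSets 4 V A \ E) v := by
  set Y := {w ∈ A | insert w T ∈ E}
  have hYA : Y ⊆ A := filter_subset _ _
  have hsub : oddSets 4 (insert v Y) A ⊆ oddSets 4 V A \ E := by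
    refine hI.oddSets_subset_sdiff hT (insert_subset hv (hYA.trans hA)) ?_
    exact (forall_mem_insert _ _ _).2 ⟨hTv, fun w hw => (mem_filter.1 hw).2⟩
  rw [← card_powersetCard, degree_eq_card_link (sdiff_subset.trans oddSets_subset)]
  refine card_le_card fun R hR => ?_
  obtain ⟨hRY, hR₃⟩ := mem_powersetCard.1 hR
  have hvR : v ∉ R := fun h => hvA (hYA (hRY h))
  refine mem_filter.2 ⟨powersetCard_mono (hYA.trans hA) hR, hsub (mem_filter.2 ⟨?_, ?_⟩)⟩
  · exact mem_powersetCard.2 ⟨insert_subset_insert _ hRY, by rw [card_insert_of_notMem hvR, hR₃]⟩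
  · rw [insert_inter_of_notMem hvA, inter_eq_left.2 (hRY.trans hYA), hR₃]
    decide

lemma le_mul_of_mul_choose_three_le {y s : ℝ} (hs : 10 ^ 14 ≤ s)
    (h : y * (y - 1) * (y - 2) / 6 ≤ 2 / 10 ^ 5 * s ^ 3) : y ≤ 6 / 100 * s := by
  by_contra! hlt
  have hy : 55 / 1000 * s ≤ y - 2 := by linarith
  have : 0 < s := by linarith
  have : (55 / 1000 * s) ^ 3 ≤ y * (y - 1) * (y - 2) := by
    have hy₁ : 0 ≤ y - 1 := by linarith
    have hy₀ : 0 ≤ y := by linarith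
    rw [pow_succ, pow_two]
    gcongr <;> linarith
  nlinarith [show 0 < s ^ 3 by positivity]

lemma two_fifths_mul_card_le_of_mem_shadow (hE : E ⊆ powersetCard 4 V) (hI : HasIndepNbhds E)
    (hA : A ⊆ V) (hV : (10 : ℝ) ^ 14 ≤ #V) (habs : |2 * (#A : ℝ) - #V| ≤ #V / 200)
    (hd : ∀ v ∈ V, (degree (oddSets 4 V A \ E) v : ℝ) ≤ 2 / 10 ^ 5 * (#V : ℝ) ^ 3)
    (hT : T ∈ (E \ oddSets 4 V A).shadow) :
    2 / 5 * (#V : ℝ) ≤ #{q ∈ oddSets 4 V A \ E | T ⊆ q} := by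
  obtain ⟨v, hvT, hmem⟩ := mem_shadow_iff_insert_mem.1 hT
  obtain ⟨B, hB, hvB, hBA, habsB⟩ := exists_oddSets_eq_notMem hA v
  rw [← hBA] at hd hmem ⊢
  rw [← habsB] at habs
  obtain ⟨hTE, hTodd⟩ := Finset.mem_sdiff.1 hmem
  obtain ⟨hTV, hT₄⟩ := mem_powersetCard.1 (hE hTE)
  obtain ⟨hv, hTV⟩ := insert_subset_iff.1 hTV
  have hT₃ : #T = 3 := by rw [card_insert_of_notMem hvT] at hT₄; omega
  have heven : Even #(T ∩ B) := by
    rw [← Nat.not_odd_iff_even]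
    intro hodd
    rw [← insert_inter_of_notMem hvB] at hodd
    exact hTodd (mem_filter.2 ⟨hE hTE, hodd⟩)
  have hmissing : #{w ∈ B | insert w T ∉ E} ≤ #{q ∈ oddSets 4 V B \ E | T ⊆ q} + #T := by
    refine card_filter_insert_notMem_le fun w hw => ?_
    obtain ⟨hwB, hwT⟩ := Finset.mem_sdiff.1 hw
    refine mem_filter.2 ⟨mem_powersetCard.2 ⟨insert_subset (hB hwB) hTV, ?_⟩, ?_⟩
    · rw [card_insert_of_notMem hwT, hT₃]
    · exact (odd_card_inter_insert hwT).2 (iff_of_true hwB heven)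
  have hpresent : (#{w ∈ B | insert w T ∈ E} : ℝ) ≤ 6 / 100 * #V := by
    refine le_mul_of_mul_choose_three_le hV ?_
    rw [← cast_choose_three]
    exact (Nat.cast_le.2 (choose_three_le_degree_sdiff hI hB hv hvB hT₃ hTE)).trans (hd v hv)
  have hsplit : (#{w ∈ B | insert w T ∈ E} : ℝ) + #{w ∈ B | insert w T ∉ E} = #B :=
    mod_cast card_filter_add_card_filter_not _
  have hmissing' : (#{w ∈ B | insert w T ∉ E} : ℝ) ≤ #{q ∈ oddSets 4 V B \ E | T ⊆ q} + 3 :=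
    mod_cast hT₃ ▸ hmissing
  linarith [(abs_le.1 habs).1]

lemma card_sdiff_oddSets_lt (hE : E ⊆ powersetCard 4 V) (hI : HasIndepNbhds E) (hA : A ⊆ V)
    (hV : (10 : ℝ) ^ 14 ≤ #V) (habs : |2 * (#A : ℝ) - #V| ≤ #V / 200)
    (hbad : ∀ v ∈ V, (degree (E \ oddSets 4 V A) v : ℝ) ≤ 11 / 10 ^ 6 * (#V : ℝ) ^ 3)
    (hmiss : ∀ v ∈ V, (degree (oddSets 4 V A \ E) v : ℝ) ≤ 2 / 10 ^ 5 * (#V : ℝ) ^ 3)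
    (hne : (E \ oddSets 4 V A).Nonempty) : #(E \ oddSets 4 V A) < #(oddSets 4 V A \ E) := by
  have hZ : E \ oddSets 4 V A ⊆ powersetCard 4 V := sdiff_subset.trans hE
  have hZ₄ : ∀ f ∈ E \ oddSets 4 V A, #f = 4 := fun f hf => (mem_powersetCard.1 (hZ hf)).2
  have hsmall : (#(E \ oddSets 4 V A) : ℝ) ≤ 1 / 10 ^ 5 * (#V : ℝ) ^ 4 := by
    have hsum : ∑ v ∈ V, (degree (E \ oddSets 4 V A) v : ℝ) = 4 * #(E \ oddSets 4 V A) :=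
      mod_cast sum_degree_of_subset_powersetCard hZ
    have hle := hsum.symm.trans_le (sum_le_card_nsmul V _ _ hbad)
    rw [nsmul_eq_mul] at hle
    linarith [show 0 ≤ (#V : ℝ) ^ 4 by positivity,
      show (#V : ℝ) * (11 / 10 ^ 6 * (#V : ℝ) ^ 3) = 11 / 10 ^ 6 * (#V : ℝ) ^ 4 by ring]
  have hshadow := four_mul_card_lt_mul_card_shadow hZ₄ hne hV hsmall
  have hlower : #(E \ oddSets 4 V A).shadow * (2 / 5 * (#V : ℝ)) ≤
      ∑ T ∈ (E \ oddSets 4 V A).shadow, (#{q ∈ oddSets 4 V A \ E | T ⊆ q} : ℝ) := by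
    rw [← nsmul_eq_mul]
    exact card_nsmul_le_sum _ _ _ fun T hT =>
      two_fifths_mul_card_le_of_mem_shadow hE hI hA hV habs hmiss hT
  have hupper : ∑ T ∈ (E \ oddSets 4 V A).shadow, (#{q ∈ oddSets 4 V A \ E | T ⊆ q} : ℝ) ≤
      4 * #(oddSets 4 V A \ E) := by
    have hT₃ : ∀ T ∈ (E \ oddSets 4 V A).shadow, #T = 3 :=
      Set.Sized.shadow (r := 4) fun f hf => hZ₄ f hf
    exact mod_cast sum_card_filter_superset_le hT₃ fun q hq =>
      (mem_powersetCard.1 (oddSets_subset (mem_sdiff.1 hq).1)).2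
  have : (#(E \ oddSets 4 V A) : ℝ) < #(oddSets 4 V A \ E) := by linarith
  exact mod_cast this

lemma abs_card_sub_card_le_card_symmDiff (A B : Finset α) :
    |(#A : ℝ) - #B| ≤ #(symmDiff A B) := by
  have key : ∀ B C : Finset α, #B ≤ #C + #(symmDiff B C) := fun B C => by
    refine (card_le_card fun x hx => ?_).trans (card_union_le C _)
    simp only [mem_union, mem_symmDiff]
    tauto
  have h₁ : (#A : ℝ) ≤ #B + #(symmDiff A B) := mod_cast key A B
  have h₂ : (#B : ℝ) ≤ #A + #(symmDiff A B) := mod_cast symmDiff_comm A B ▸ key B A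
  exact abs_le.2 ⟨by linarith, by linarith⟩

/-- The side of the bipartition suggested by the links: the vertices whose link in `V` has few
members meeting `A` in an odd number of points. -/
noncomputable def realign (E : Finset (Finset α)) (V A : Finset α) : Finset α :=
  {v ∈ V | (#(oddLink E V A v) : ℝ) ≤ 1 / 10 ^ 5 * (#V : ℝ) ^ 3}

lemma realign_subset : realign E V A ⊆ V := filter_subset _ _

lemma card_oddLink_add_eq_degree (hE : E ⊆ powersetCard 4 V) (A : Finset α) (v : α) :
    (#(oddLink E V A v) : ℝ) + #(oddLink E V (V \ A) v) = degree E v := by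
  rw [degree_eq_card_link hE]
  exact mod_cast card_oddLink_add_card_oddLink_sdiff

lemma IsNearOdd.card_oddLink_sdiff_le (h : IsNearOdd E V A) (hE : E ⊆ powersetCard 4 V)
    (hI : HasIndepNbhds E) (hd : (1 / 12 - 1 / 10 ^ 12) * (#V : ℝ) ^ 3 ≤ degree E v)
    (hv : v ∈ V) (hvA : v ∉ realign E V A) :
    (#(oddLink E V (V \ A) v) : ℝ) ≤ 1 / 10 ^ 5 * (#V : ℝ) ^ 3 := by
  have hV := h.le_card
  rcases h.card_link_trichotomy hI v with hodd | heven | hlink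
  · exact absurd (mem_filter.2 ⟨hv, hodd⟩) hvA
  · exact heven
  · rw [← degree_eq_card_link hE] at hlink
    linarith [show 0 < (#V : ℝ) ^ 3 by positivity]

lemma IsNearOdd.le_degree_of_mem_symmDiff (h : IsNearOdd E V A) (hE : E ⊆ powersetCard 4 V)
    (hI : HasIndepNbhds E) (hd : (1 / 12 - 1 / 10 ^ 12) * (#V : ℝ) ^ 3 ≤ degree E v)
    (hv : v ∈ symmDiff A (realign E V A)) :
    (#V : ℝ) ^ 3 / 13 ≤ degree (E \ oddSets 4 V A) v := by
  have hsum := card_oddLink_add_eq_degree hE A v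
  have : 0 ≤ (#V : ℝ) ^ 3 := by positivity
  rcases mem_symmDiff.1 hv with ⟨hvA, hvR⟩ | ⟨hvR, hvA⟩
  · have := h.card_oddLink_sdiff_le hE hI hd (h.subset hvA) hvR
    rw [degree_sdiff_oddSets_of_mem hE h.subset hvA]
    linarith
  · have := (mem_filter.1 hvR).2
    rw [degree_sdiff_oddSets_of_notMem hE hvA]
    linarith

lemma IsNearOdd.card_symmDiff_realign_le (h : IsNearOdd E V A) (hE : E ⊆ powersetCard 4 V)
    (hI : HasIndepNbhds E) (hd : ∀ v ∈ V, (1 / 12 - 1 / 10 ^ 12) * (#V : ℝ) ^ 3 ≤ degree E v)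
    (hbad : (#(E \ oddSets 4 V A) : ℝ) ≤ 1 / 10 ^ 11 * (#V : ℝ) ^ 4) :
    (#(symmDiff A (realign E V A)) : ℝ) ≤ 1 / 10 ^ 9 * #V := by
  have hD : symmDiff A (realign E V A) ⊆ V :=
    symmDiff_le_sup.trans (union_subset h.subset realign_subset)
  have hcount := card_mul_le_of_le_degree (sdiff_subset.trans hE) hD fun v hv =>
    h.le_degree_of_mem_symmDiff hE hI (hd v (hD hv)) hv
  have hV : (0 : ℝ) < #V := lt_of_lt_of_le (by norm_num) h.le_card
  refine le_of_mul_le_mul_right ?_ (show 0 < (#V : ℝ) ^ 3 / 13 by positivity)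
  push_cast at hcount
  linarith [show 1 / 10 ^ 9 * #V * ((#V : ℝ) ^ 3 / 13) = (#V : ℝ) ^ 4 / (13 * 10 ^ 9) by ring,
    show 0 ≤ (#V : ℝ) ^ 4 by positivity]

lemma IsNearOdd.degree_sdiff_oddSets_realign_le (h : IsNearOdd E V A) (hE : E ⊆ powersetCard 4 V)
    (hI : HasIndepNbhds E) (hd : (1 / 12 - 1 / 10 ^ 12) * (#V : ℝ) ^ 3 ≤ degree E v)
    (hD : (#(symmDiff A (realign E V A)) : ℝ) ≤ 1 / 10 ^ 9 * #V) (hv : v ∈ V) :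
    (degree (E \ oddSets 4 V (realign E V A)) v : ℝ) ≤ 11 / 10 ^ 6 * (#V : ℝ) ^ 3 := by
  have hiff : ∀ x, x ∉ symmDiff A (realign E V A) → (x ∈ A ↔ x ∈ realign E V A) := fun x hx => by
    rw [mem_symmDiff] at hx
    tauto
  have hD₂ : (#(symmDiff A (realign E V A)) : ℝ) * (#V : ℝ) ^ 2 ≤ 1 / 10 ^ 9 * (#V : ℝ) ^ 3 :=
    (mul_le_mul_of_nonneg_right hD (by positivity)).trans_eq (by ring)
  by_cases hvR : v ∈ realign E V A
  · have hsmall := (mem_filter.1 hvR).2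
    have hle : (#(oddLink E V (realign E V A) v) : ℝ) ≤ _ :=
      Nat.cast_le.2 (card_oddLink_le_add fun x _ => hiff x)
    rw [degree_sdiff_oddSets_of_mem hE realign_subset hvR]
    push_cast at hle
    linarith
  · have hsmall := h.card_oddLink_sdiff_le hE hI hd hv hvR
    have hle : (#(oddLink E V (V \ realign E V A) v) : ℝ) ≤ _ :=
      Nat.cast_le.2 <| card_oddLink_le_add (A := V \ A) (D := symmDiff A (realign E V A))
        fun x hx hxD => by simp only [Finset.mem_sdiff, hx, hiff x hxD]
    rw [degree_sdiff_oddSets_of_notMem hE hvR]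
    push_cast at hle
    linarith

lemma HasIndepNbhds.exists_forall_degree_sdiff_oddSets_le (hI : HasIndepNbhds E)
    (hE : E ⊆ powersetCard 4 V) (hV : (10 : ℝ) ^ 14 ≤ #V)
    (hd : ∀ v ∈ V, (1 / 12 - 1 / 10 ^ 12) * (#V : ℝ) ^ 3 ≤ degree E v) :
    ∃ A ⊆ V, |2 * (#A : ℝ) - #V| ≤ #V / 200 ∧
      ∀ v ∈ V, (degree (E \ oddSets 4 V A) v : ℝ) ≤ 11 / 10 ^ 6 * (#V : ℝ) ^ 3 := by
  obtain ⟨A, hA, hbad, hmiss, habs⟩ := hI.exists_oddSets_approx hE hV hd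
  have h : IsNearOdd E V A :=
    ⟨hA, hV, fun f hf => (mem_powersetCard.1 (hE hf)).2, hmiss, habs.trans (by linarith)⟩
  have hD := h.card_symmDiff_realign_le hE hI hd hbad
  refine ⟨realign E V A, realign_subset, ?_, fun v hv =>
    h.degree_sdiff_oddSets_realign_le hE hI (hd v hv) hD hv⟩
  have hclose := abs_le.1 (abs_card_sub_card_le_card_symmDiff A (realign E V A))
  rw [abs_le] at habs ⊢
  exact ⟨by linarith, by linarith⟩

theorem HasIndepNbhds.exists_card_lt_or_eq_oddSets_of_le_degree (hI : HasIndepNbhds E)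
    (hE : E ⊆ powersetCard 4 V) (hV : (10 : ℝ) ^ 14 ≤ #V)
    (hd : ∀ v ∈ V, (1 / 12 - 1 / 10 ^ 12) * (#V : ℝ) ^ 3 ≤ degree E v) :
    ∃ A ⊆ V, #E < #(oddSets 4 V A) ∨ E = oddSets 4 V A := by
  obtain ⟨A, hA, habs, hbad⟩ := hI.exists_forall_degree_sdiff_oddSets_le hE hV hd
  refine ⟨A, hA, ?_⟩
  rcases (E \ oddSets 4 V A).eq_empty_or_nonempty with hempty | hne
  · have hsub := sdiff_eq_empty_iff_subset.1 hempty
    exact (eq_or_ssubset_of_subset hsub).symm.imp_left card_lt_card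
  · have hlt := card_sdiff_oddSets_lt hE hI hA hV habs hbad
      (fun v hv => degree_oddSets_sdiff_le hA habs (hd v hv) (hbad v hv)) hne
    have hcomm := card_add_card_sdiff_comm E (oddSets 4 V A)
    exact Or.inl (by omega)

end Core

section Turan

open Finset

/-- An upper bound for the number of quadruples of an `x`-element set meeting a given subset in an
odd number of points. -/
noncomputable def oddBound (x : ℝ) : ℝ := (x ^ 2 - 3 * x + 4) ^ 2 / 48

lemma pow_four_sub_le_oddBound_sub_sq {x : ℝ} (hx : 2 ≤ x) :
    x ^ 4 / 48 - x ^ 3 ≤ oddBound x - x ^ 2 := by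
  have hcube : 2 * x ^ 2 ≤ x * x ^ 2 := mul_le_mul_of_nonneg_right hx (by positivity)
  have hsq : 2 * x ≤ x * x := mul_le_mul_of_nonneg_right hx (by positivity)
  rw [oddBound]
  linarith

lemma le_oddBound_sub_sq {x : ℝ} (hx : 10 ^ 17 ≤ x) :
    (1 / 48 - 1 / 10 ^ 17) * x ^ 4 ≤ oddBound x - x ^ 2 := by
  have hcube : 10 ^ 17 * x ^ 3 ≤ x * x ^ 3 := mul_le_mul_of_nonneg_right hx (by positivity)
  linarith [pow_four_sub_le_oddBound_sub_sq (x := x) (by linarith)]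

lemma one_twelfth_mul_cube_le {s d : ℝ} (hs : 10 ^ 14 ≤ s)
    (hd : (1 / 48 - 1 / 10 ^ 13) * (s ^ 4 - (s - 1) ^ 4) ≤ d) :
    (1 / 12 - 1 / 10 ^ 12) * s ^ 3 ≤ d := by
  have hsq : 10 ^ 14 * s ^ 2 ≤ s * s ^ 2 := mul_le_mul_of_nonneg_right hs (by positivity)
  have hdiff : 4 * s ^ 3 - 6 * s ^ 2 ≤ s ^ 4 - (s - 1) ^ 4 := by
    linear_combination (by linarith : 1 ≤ 4 * s)
  linarith [mul_le_mul_of_nonneg_left hdiff (show (0 : ℝ) ≤ 1 / 48 - 1 / 10 ^ 13 by norm_num),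
    show 0 ≤ s ^ 3 by positivity]

lemma mul_le_of_sub_mul_pow_four_le {x s e d : ℝ} (hx : 10 ^ 17 ≤ x) (hs : 0 ≤ s) (hsx : s ≤ x)
    (he : (1 / 48 - 1 / 10 ^ 17) * x ^ 4 ≤ e) (hd : d ≤ s ^ 4 / 48 + s ^ 3)
    (h : e - (1 / 48 - 1 / 10 ^ 13) * x ^ 4 ≤ d - (1 / 48 - 1 / 10 ^ 13) * s ^ 4) :
    (1 - 2 / 10 ^ 4) * x ≤ s := by
  by_contra! hlt
  have hx₃ : 10 ^ 17 * x ^ 3 ≤ x * x ^ 3 := mul_le_mul_of_nonneg_right hx (by positivity)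
  have hs₃ : s ^ 3 ≤ x ^ 3 := pow_le_pow_left₀ hs hsx 3
  have hs₄ : s ^ 4 ≤ ((1 - 2 / 10 ^ 4) * x) ^ 4 := pow_le_pow_left₀ hs hlt.le 4
  rw [mul_pow] at hs₄
  have hx₄ : 0 < x ^ 4 := by positivity
  linarith

lemma oddBound_sub_lt {x s : ℝ} (hx : 10 ^ 16 ≤ x) (hs : 0 ≤ s) (hsx : s + 1 ≤ x) :
    oddBound s - (1 / 48 - 1 / 10 ^ 13) * s ^ 4 <
      oddBound x - x ^ 2 - (1 / 48 - 1 / 10 ^ 13) * x ^ 4 := by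
  have hx₃ : 10 ^ 16 * x ^ 2 ≤ x * x ^ 2 := mul_le_mul_of_nonneg_right hx (by positivity)
  have hxs : x * s ≤ x ^ 2 := by nlinarith
  have hss : s ^ 2 ≤ x ^ 2 := pow_le_pow_left₀ hs (by linarith) 2
  have hslope : 2 * x ^ 2 < 1 / 10 ^ 13 * (x ^ 3 + x ^ 2 * s + x * s ^ 2 + s ^ 3)
      - 6 / 48 * (x ^ 2 + x * s + s ^ 2) + 17 / 48 * (x + s) - 24 / 48 := by
    have : 0 < x ^ 2 := by positivity
    have : 0 ≤ x ^ 2 * s + x * s ^ 2 + s ^ 3 := by positivity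
    linarith
  have hmul := mul_lt_mul_of_pos_left hslope (show 0 < x - s by linarith)
  have : 1 * (2 * x ^ 2) ≤ (x - s) * (2 * x ^ 2) :=
    mul_le_mul_of_nonneg_right (by linarith) (by positivity)
  rw [oddBound, oddBound]
  nlinarith [sq_nonneg x]

variable {α : Type*} [DecidableEq α] {V W S A : Finset α} {E : Finset (Finset α)} {v : α}

lemma card_oddSets_four_eq_oddBound_sub (hA : A ⊆ V) :
    (#(oddSets 4 V A) : ℝ) = oddBound #V -
      ((#V : ℝ) ^ 2 - 3 * #V + 4 - 4 * (#A * #(V \ A))) ^ 2 / 48 := by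
  rw [cast_card_oddSets_four hA, cast_card_sdiff hA, oddBound]
  ring

lemma card_oddSets_four_le_oddBound (hA : A ⊆ V) : (#(oddSets 4 V A) : ℝ) ≤ oddBound #V := by
  rw [card_oddSets_four_eq_oddBound_sub hA]
  exact sub_le_self _ (by positivity)

lemma exists_oddBound_sub_sq_le (hV : V.Nonempty) :
    ∃ A ⊆ V, #A = #V / 2 ∧ oddBound #V - (#V : ℝ) ^ 2 ≤ #(oddSets 4 V A) := by
  obtain ⟨A, hA, hc⟩ := exists_subset_card_eq (Nat.div_le_self #V 2)
  refine ⟨A, hA, hc, ?_⟩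
  rw [card_oddSets_four_eq_oddBound_sub hA, cast_card_sdiff hA, hc]
  have hV₁ : (1 : ℝ) ≤ #V := mod_cast hV.card_pos
  refine sub_le_sub_left ?_ _
  rcases Nat.even_or_odd' #V with ⟨k, hk | hk⟩
  · have hhalf : ((#V / 2 : ℕ) : ℝ) = #V / 2 := by
      rw [show #V / 2 = k by omega, hk]
      push_cast
      ring
    rw [hhalf]
    nlinarith
  · have hhalf : ((#V / 2 : ℕ) : ℝ) = (#V - 1) / 2 := by
      rw [show #V / 2 = k by omega, hk]
      push_cast
      ring
    rw [hhalf]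
    nlinarith

lemma HasIndepNbhds.exists_restrict_degree_ge (hI : HasIndepNbhds E) (hE : E ⊆ powersetCard 4 V)
    (hV : (10 : ℝ) ^ 17 ≤ #V) (hcard : (1 / 48 - 1 / 10 ^ 17) * (#V : ℝ) ^ 4 ≤ #E) :
    ∃ S ⊆ V, (1 - 2 / 10 ^ 4) * (#V : ℝ) ≤ #S ∧
      (∀ v ∈ S, (1 / 12 - 1 / 10 ^ 12) * (#S : ℝ) ^ 3 ≤ degree (restrict E S) v) ∧
      #E - (1 / 48 - 1 / 10 ^ 13) * (#V : ℝ) ^ 4 ≤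
        #(restrict E S) - (1 / 48 - 1 / 10 ^ 13) * (#S : ℝ) ^ 4 := by
  obtain ⟨S, hS, hdeg, hpot⟩ := exists_restrict_mul_sub_le_degree hE (1 / 48 - 1 / 10 ^ 13)
  have hlarge := mul_le_of_sub_mul_pow_four_le hV (Nat.cast_nonneg _)
    (Nat.cast_le.2 (card_le_card hS)) hcard
    ((hI.mono (restrict_subset E S)).card_le (restrict_subset_powersetCard hE S)) hpot
  exact ⟨S, hS, hlarge, fun v hv => one_twelfth_mul_cube_le (by linarith) (hdeg v hv), hpot⟩

theorem HasIndepNbhds.exists_card_lt_or_eq_oddSets (hI : HasIndepNbhds E)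
    (hE : E ⊆ powersetCard 4 V) (hV : (10 : ℝ) ^ 17 ≤ #V) :
    ∃ A ⊆ V, #E < #(oddSets 4 V A) ∨ E = oddSets 4 V A := by
  have hne : V.Nonempty := card_pos.1 (by exact_mod_cast (by linarith : (0 : ℝ) < #V))
  obtain ⟨A₀, hA₀, -, hA₀card⟩ := exists_oddBound_sub_sq_le hne
  rcases lt_or_ge #E #(oddSets 4 V A₀) with hlt | hge
  · exact ⟨A₀, hA₀, Or.inl hlt⟩
  have hcard : oddBound #V - (#V : ℝ) ^ 2 ≤ #E := hA₀card.trans (Nat.cast_le.2 hge)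
  obtain ⟨S, hS, hlarge, hdeg, hpot⟩ :=
    hI.exists_restrict_degree_ge hE hV ((le_oddBound_sub_sq hV).trans hcard)
  obtain ⟨A, hA, hcore⟩ := (hI.mono (restrict_subset E S)).exists_card_lt_or_eq_oddSets_of_le_degree
    (restrict_subset_powersetCard hE S) (by linarith) hdeg
  rcases eq_or_ssubset_of_subset hS with rfl | hss
  · rw [restrict_self hE] at hcore
    exact ⟨A, hA, hcore⟩
  · have hle : (#(restrict E S) : ℝ) ≤ oddBound #S :=
      (Nat.cast_le.2 (hcore.elim le_of_lt fun h => h ▸ le_rfl)).trans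
        (card_oddSets_four_le_oddBound hA)
    have hsucc : (#S : ℝ) + 1 ≤ #V := mod_cast card_lt_card hss
    linarith [oddBound_sub_lt (by linarith) (Nat.cast_nonneg _) hsucc]

theorem HasIndepNbhds.card_le_oddBound (hI : HasIndepNbhds E) (hE : E ⊆ powersetCard 4 V)
    (hV : (10 : ℝ) ^ 17 ≤ #V) : (#E : ℝ) ≤ oddBound #V := by
  obtain ⟨A, hA, h⟩ := hI.exists_card_lt_or_eq_oddSets hE hV
  exact (Nat.cast_le.2 (h.elim le_of_lt fun h => h ▸ le_rfl)).trans
    (card_oddSets_four_le_oddBound hA)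

lemma oddSets_sdiff_restrict (E : Finset (Finset α)) (S A : Finset α) :
    oddSets 4 S A \ restrict E S = oddSets 4 S A \ E := by
  ext q
  simp only [Finset.mem_sdiff, restrict, mem_filter]
  refine and_congr_right fun hq => ?_
  simp only [(mem_powersetCard.1 (oddSets_subset hq)).1, and_true]

lemma IsNearOdd.card_link_le (h : IsNearOdd E W A) (hI : HasIndepNbhds E) (v : α) :
    (#(link E W v) : ℝ) ≤ (1 / 12 + 2 / 10 ^ 5) * (#W : ℝ) ^ 3 := by
  have key : ∀ {B}, IsNearOdd E W B → (#(oddLink E W B v) : ℝ) ≤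
      (1 / 12 + 1 / 10 ^ 6) * (#W : ℝ) ^ 3 := fun hB =>
    (Nat.cast_le.2 (card_le_card oddLink_subset_oddSets)).trans
      (card_oddSets_three_le hB.subset hB.abs_le)
  have hodd := key h
  have heven := key h.sdiff
  have hsum : (#(oddLink E W A v) : ℝ) + #(oddLink E W (W \ A) v) = #(link E W v) :=
    mod_cast card_oddLink_add_card_oddLink_sdiff
  rcases h.card_link_trichotomy hI v with h | h | h <;>
    linarith [show 0 ≤ (#W : ℝ) ^ 3 by positivity]

lemma card_link_le_card_link_add (E : Finset (Finset α)) (V S : Finset α) (v : α) :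
    #(link E V v) ≤ #(link E S v) + #(V \ S) * #V ^ 2 := by
  have hsub : link E V v ⊆ link E S v ∪ {T ∈ powersetCard 3 V | ¬ Disjoint T (V \ S)} := by
    intro T hT
    obtain ⟨hT₃, hTE⟩ := mem_filter.1 hT
    obtain ⟨hTV, hcard⟩ := mem_powersetCard.1 hT₃
    by_cases hdisj : Disjoint T (V \ S)
    · have hTS : T ⊆ S := fun x hx => by_contra fun hxS =>
        disjoint_left.1 hdisj hx (Finset.mem_sdiff.2 ⟨hTV hx, hxS⟩)
      exact mem_union_left _ (mem_filter.2 ⟨mem_powersetCard.2 ⟨hTS, hcard⟩, hTE⟩)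
    · exact mem_union_right _ (mem_filter.2 ⟨hT₃, hdisj⟩)
  calc #(link E V v) ≤ #(link E S v) + #{T ∈ powersetCard 3 V | ¬ Disjoint T (V \ S)} :=
        (card_le_card hsub).trans (card_union_le _ _)
    _ ≤ #(link E S v) + #(V \ S) * #V ^ 2 :=
        Nat.add_le_add_left (card_filter_not_disjoint_powersetCard_three_le _ _) _

theorem HasIndepNbhds.degree_le (hI : HasIndepNbhds E) (hE : E ⊆ powersetCard 4 V)
    (hV : (10 : ℝ) ^ 17 ≤ #V) (hcard : (1 / 48 - 1 / 10 ^ 17) * (#V : ℝ) ^ 4 ≤ #E) (v : α) :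
    (degree E v : ℝ) ≤ (1 / 12 + 1 / 2000) * (#V : ℝ) ^ 3 := by
  obtain ⟨S, hS, hlarge, hdeg, -⟩ := hI.exists_restrict_degree_ge hE hV hcard
  have hS₁₄ : (10 : ℝ) ^ 14 ≤ #S := by linarith
  obtain ⟨A, hA, -, hmiss, habs⟩ := (hI.mono (restrict_subset E S)).exists_oddSets_approx
    (restrict_subset_powersetCard hE S) hS₁₄ hdeg
  rw [oddSets_sdiff_restrict] at hmiss
  have hnear : IsNearOdd E S A :=
    ⟨hA, hS₁₄, fun f hf => (mem_powersetCard.1 (hE hf)).2, hmiss, habs.trans (by linarith)⟩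
  have hlink : (#(link E V v) : ℝ) ≤ #(link E S v) + #(V \ S) * (#V : ℝ) ^ 2 :=
    mod_cast card_link_le_card_link_add E V S v
  rw [cast_card_sdiff hS] at hlink
  rw [degree_eq_card_link hE]
  have hcube : (#S : ℝ) ^ 3 ≤ (#V : ℝ) ^ 3 :=
    pow_le_pow_left₀ (Nat.cast_nonneg _) (Nat.cast_le.2 (card_le_card hS)) 3
  have hrest : ((#V : ℝ) - #S) * (#V : ℝ) ^ 2 ≤ 2 / 10 ^ 4 * #V * (#V : ℝ) ^ 2 :=
    mul_le_mul_of_nonneg_right (by linarith) (by positivity)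
  linarith [hnear.card_link_le hI v, show 0 ≤ (#V : ℝ) ^ 3 by positivity]

end Turan

section Matching

open Finset

variable {α : Type*} [DecidableEq α] {V U U' : Finset α} {E : Finset (Finset α)} {k : ℕ}

/-- There are `k` pairwise disjoint seven-element subsets of `U` on which `E` fails to have
independent neighbourhoods, that is, `k` vertex-disjoint copies of `𝔽_{4,3}` inside `U`. -/
def HasDependentMatching (E : Finset (Finset α)) (U : Finset α) (k : ℕ) : Prop :=
  ∃ S : Fin k → Finset α, (∀ i, S i ⊆ U ∧ #(S i) = 7 ∧ ¬ HasIndepNbhds (restrict E (S i))) ∧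
    Pairwise fun i j => Disjoint (S i) (S j)

lemma hasDependentMatching_zero (E : Finset (Finset α)) (U : Finset α) :
    HasDependentMatching E U 0 :=
  ⟨Fin.elim0, fun i => i.elim0, fun i => i.elim0⟩

lemma exists_disjoint_of_not_hasIndepNbhds (hE : ∀ f ∈ E, #f = 4) (h : ¬ HasIndepNbhds E) :
    ∃ T f, #T = 3 ∧ f ∈ E ∧ Disjoint T f ∧ ∀ w ∈ f, insert w T ∈ E := by
  rw [HasIndepNbhds] at h
  push Not at h
  obtain ⟨T, f, hT, hf, hw⟩ := h
  refine ⟨T, f, hT, hf, disjoint_right.2 fun w hwf hwT => ?_, hw⟩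
  have := hE _ (hw w hwf)
  rw [insert_eq_of_mem hwT] at this
  omega

lemma exists_card_eq_seven_of_not_hasIndepNbhds (hE : ∀ f ∈ E, #f = 4)
    (h : ¬ HasIndepNbhds (restrict E U)) :
    ∃ S ⊆ U, #S = 7 ∧ ¬ HasIndepNbhds (restrict E S) := by
  obtain ⟨T, f, hT, hf, hdisj, hw⟩ := exists_disjoint_of_not_hasIndepNbhds
    (fun f hf => hE f (restrict_subset E U hf)) h
  obtain ⟨hfE, hfU⟩ := mem_filter.1 hf
  obtain ⟨x, hx⟩ : f.Nonempty := card_pos.1 (by rw [hE f hfE]; norm_num)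
  have hTU : T ⊆ U := (subset_insert _ _).trans (mem_filter.1 (hw x hx)).2
  refine ⟨T ∪ f, union_subset hTU hfU, by rw [card_union_of_disjoint hdisj, hT, hE f hfE], ?_⟩
  intro hI
  obtain ⟨w, hwf, hwT⟩ := hI T f hT (mem_filter.2 ⟨hfE, subset_union_right⟩)
  exact hwT (mem_filter.2 ⟨restrict_subset _ _ (hw w hwf),
    insert_subset (mem_union_right _ hwf) subset_union_left⟩)

lemma HasDependentMatching.exists_cover_or_succ (hE : ∀ f ∈ E, #f = 4) (hU : U' ⊆ U)
    (h : HasDependentMatching E U' k) :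
    ∃ W ⊆ U', #W ≤ 7 * k ∧
      (HasIndepNbhds (restrict E (U \ W)) ∨ HasDependentMatching E U (k + 1)) := by
  obtain ⟨S, hS, hdisj⟩ := h
  refine ⟨univ.biUnion S, biUnion_subset.2 fun i _ => (hS i).1, ?_, or_iff_not_imp_left.2 ?_⟩
  · have := card_biUnion_le_card_mul univ S 7 fun i _ => (hS i).2.1.le
    rwa [card_fin, mul_comm] at this
  · intro hI
    obtain ⟨R, hR, hR₇, hRI⟩ := exists_card_eq_seven_of_not_hasIndepNbhds hE hI
    obtain ⟨hRU, hRS⟩ := subset_sdiff.1 hR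
    have hRS : ∀ i, Disjoint R (S i) := fun i => (disjoint_biUnion_right _ _ _).1 hRS i (mem_univ i)
    refine ⟨Fin.cons R S, Fin.cases ⟨hRU, hR₇, hRI⟩ fun i => ⟨(hS i).1.trans hU, (hS i).2⟩, ?_⟩
    rw [pairwise_fin_succ_iff]
    exact ⟨fun i => (hRS i).symm, hRS, hdisj⟩

lemma exists_cover_of_not_hasDependentMatching (hE : ∀ f ∈ E, #f = 4) (U : Finset α) (k : ℕ)
    (h : ¬ HasDependentMatching E U (k + 1)) :
    ∃ W ⊆ U, #W ≤ 7 * k ∧ HasIndepNbhds (restrict E (U \ W)) := by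
  induction k with
  | zero =>
    obtain ⟨W, hWU, hW, hcover⟩ :=
      (hasDependentMatching_zero E U).exists_cover_or_succ hE Subset.rfl
    exact ⟨W, hWU, hW, hcover.resolve_right h⟩
  | succ k ih =>
    by_cases hk : HasDependentMatching E U (k + 1)
    · obtain ⟨W, hWU, hW, hcover⟩ := hk.exists_cover_or_succ hE Subset.rfl
      exact ⟨W, hWU, hW, hcover.resolve_right h⟩
    · obtain ⟨W, hWU, hW, hI⟩ := ih hk
      exact ⟨W, hWU, by omega, hI⟩

lemma card_le_card_restrict_sdiff_add_sum_degree {r : ℕ} (hE : E ⊆ powersetCard r V)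
    (X : Finset α) : #E ≤ #(restrict E (V \ X)) + ∑ x ∈ X, degree E x := by
  have hsub : E ⊆ restrict E (V \ X) ∪ X.biUnion fun x => {f ∈ E | x ∈ f} := by
    intro f hf
    by_cases hfX : Disjoint f X
    · exact mem_union_left _
        (mem_filter.2 ⟨hf, subset_sdiff.2 ⟨(mem_powersetCard.1 (hE hf)).1, hfX⟩⟩)
    · obtain ⟨x, hxf, hxX⟩ := not_disjoint_iff.1 hfX
      exact mem_union_right _ (mem_biUnion.2 ⟨x, hxX, mem_filter.2 ⟨hf, hxf⟩⟩)
  exact (card_le_card hsub).trans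
    ((card_union_le _ _).trans (Nat.add_le_add_left card_biUnion_le _))

lemma degree_le_card_pow_three (hE : E ⊆ powersetCard 4 V) (v : α) : degree E v ≤ #V ^ 3 := by
  rw [degree_eq_card_link hE]
  refine (card_le_card (filter_subset _ _)).trans ?_
  rw [card_powersetCard]
  exact (Nat.le_mul_of_pos_left _ (Nat.factorial_pos 3)).trans (factorial_mul_choose_le_pow _ 3)

lemma card_le_card_restrict_add (hE : E ⊆ powersetCard 4 V) (hU : U ⊆ V) :
    #E ≤ #(restrict E U) + #(V \ U) * #V ^ 3 := by
  have hdel := card_le_card_restrict_sdiff_add_sum_degree hE (V \ U)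
  rw [Finset.sdiff_sdiff_eq_self hU] at hdel
  refine hdel.trans (Nat.add_le_add_left ?_ _)
  exact (sum_le_card_nsmul _ _ _ fun x _ => degree_le_card_pow_three hE x).trans_eq
    (smul_eq_mul _ _)

lemma link_restrict {v : α} (hv : v ∈ U) : link (restrict E U) U v = link E U v := by
  refine filter_congr fun T hT => ?_
  rw [restrict, mem_filter, and_iff_left (insert_subset hv (mem_powersetCard.1 hT).1)]

lemma degree_le_degree_restrict_add (hE : E ⊆ powersetCard 4 V) {v : α} (hv : v ∈ U) :
    degree E v ≤ degree (restrict E U) v + #(V \ U) * #V ^ 2 := by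
  rw [degree_eq_card_link hE, degree_eq_card_link (restrict_subset_powersetCard hE U),
    link_restrict hv]
  exact card_link_le_card_link_add E V U v

/-- The vertices whose degree is noticeably larger than the degree `#V ^ 3 / 12` of a vertex in a
balanced odd construction. -/
noncomputable def heavyVerts (E : Finset (Finset α)) (V : Finset α) : Finset α :=
  {v ∈ V | (1 / 12 + 1 / 1000) * (#V : ℝ) ^ 3 < degree E v}

lemma not_hasIndepNbhds_restrict_of_mem_heavyVerts (hE : E ⊆ powersetCard 4 V)
    (hV : (10 : ℝ) ^ 20 ≤ #V) (hcard : (1 / 48 - 1 / 10 ^ 19) * (#V : ℝ) ^ 4 ≤ #E) (hU : U ⊆ V)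
    (hVU : (#(V \ U) : ℝ) ≤ 2 / 10 ^ 19 * #V) {v : α} (hv : v ∈ heavyVerts E V) (hvU : v ∈ U) :
    ¬ HasIndepNbhds (restrict E U) := by
  intro hI
  have hUV : (#U : ℝ) ≤ #V := Nat.cast_le.2 (card_le_card hU)
  have hU₃ : (#U : ℝ) ^ 3 ≤ (#V : ℝ) ^ 3 := pow_le_pow_left₀ (Nat.cast_nonneg _) hUV 3
  have hU₄ : (#U : ℝ) ^ 4 ≤ (#V : ℝ) ^ 4 := pow_le_pow_left₀ (Nat.cast_nonneg _) hUV 4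
  have hedges : (#E : ℝ) ≤ #(restrict E U) + #(V \ U) * (#V : ℝ) ^ 3 :=
    mod_cast card_le_card_restrict_add hE hU
  have hdeg : (degree E v : ℝ) ≤ degree (restrict E U) v + #(V \ U) * (#V : ℝ) ^ 2 :=
    mod_cast degree_le_degree_restrict_add hE hvU
  have hloss₃ := mul_le_mul_of_nonneg_right hVU (show 0 ≤ (#V : ℝ) ^ 3 by positivity)
  have hloss₂ := mul_le_mul_of_nonneg_right hVU (show 0 ≤ (#V : ℝ) ^ 2 by positivity)
  have hV₀ : (0 : ℝ) < #V := by linarith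
  have hV₄ : 0 < (#V : ℝ) ^ 4 := by positivity
  have hV₃ : 0 < (#V : ℝ) ^ 3 := by positivity
  rw [cast_card_sdiff hU] at hVU
  have hdegU := hI.degree_le (restrict_subset_powersetCard hE U) (by linarith) (by linarith) v
  linarith [(mem_filter.1 hv).2]

lemma HasDependentMatching.sdiff_insert_heavyVert (hE : E ⊆ powersetCard 4 V)
    (hV : (10 : ℝ) ^ 20 ≤ #V) (hcard : (1 / 48 - 1 / 10 ^ 19) * (#V : ℝ) ^ 4 ≤ #E)
    {R : Finset α} (hR : (#R : ℝ) + 7 * k ≤ 2 / 10 ^ 19 * #V) {v : α} (hv : v ∈ heavyVerts E V)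
    (hvR : v ∉ R) (h : HasDependentMatching E (V \ insert v R) k) :
    HasDependentMatching E (V \ R) (k + 1) := by
  obtain ⟨W, hW, hWk, hcover⟩ := h.exists_cover_or_succ
    (fun f hf => (mem_powersetCard.1 (hE hf)).2) (sdiff_subset_sdiff Subset.rfl (subset_insert v R))
  refine hcover.resolve_left ?_
  rw [sdiff_sdiff_left, sup_eq_union]
  refine not_hasIndepNbhds_restrict_of_mem_heavyVerts hE hV hcard sdiff_subset ?_ hv ?_
  · have hle : #(V \ (V \ (R ∪ W))) ≤ #R + 7 * k := by
      rw [sdiff_sdiff_right_self]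
      exact (card_le_card inter_subset_right).trans ((card_union_le _ _).trans (by omega))
    exact le_trans (mod_cast hle) hR
  · have hvW : v ∉ W := fun hvW => (Finset.mem_sdiff.1 (hW hvW)).2 (mem_insert_self _ _)
    exact Finset.mem_sdiff.2 ⟨(mem_filter.1 hv).1, by simp only [mem_union, hvR, hvW, or_self,
      not_false_eq_true]⟩

lemma HasDependentMatching.add_card_of_subset_heavyVerts {t : ℕ} (hE : E ⊆ powersetCard 4 V)
    (hV : (10 : ℝ) ^ 20 ≤ #V) (hcard : (1 / 48 - 1 / 10 ^ 19) * (#V : ℝ) ^ 4 ≤ #E)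
    (ht : (t : ℝ) ≤ 1 / 10 ^ 20 * #V) {R : Finset α} (hR : R ⊆ heavyVerts E V)
    (hRk : #R + k ≤ t + 1) (h : HasDependentMatching E (V \ R) k) :
    HasDependentMatching E V (k + #R) := by
  induction R using Finset.induction_on generalizing k with
  | empty => rwa [sdiff_empty] at h
  | insert v R hv ih =>
    rw [card_insert_of_notMem hv] at hRk ⊢
    obtain ⟨hvE, hRE⟩ := insert_subset_iff.1 hR
    have hsize : (#R : ℝ) + 7 * k ≤ 2 / 10 ^ 19 * #V := by
      have : (#R : ℝ) + 1 + k ≤ t + 1 := mod_cast hRk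
      linarith [show (0 : ℝ) ≤ #R from Nat.cast_nonneg _]
    rw [← add_assoc, add_right_comm]
    exact ih hRE (by omega) (h.sdiff_insert_heavyVert hE hV hcard hsize hvE hv)

end Matching

section Join

open Finset

/-- The polynomial `x.choose 4`, extended to real arguments. -/
noncomputable def chooseFour (x : ℝ) : ℝ := x * (x - 1) * (x - 2) * (x - 3) / 24

lemma cast_choose_four (a : ℕ) : (a.choose 4 : ℝ) = chooseFour a := by
  rw [Nat.cast_choose_eq_descPochhammer_div, chooseFour]
  simp only [descPochhammer_succ_right, descPochhammer_zero, Nat.factorial]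
  simp

section Estimates

variable {n x y : ℝ}

lemma slope_bounds (hn : 10 ^ 20 ≤ n) (hy : (1 - 1 / 10 ^ 8) * n ≤ y) (hyx : y ≤ x)
    (hxn : x ≤ n) :
    (4 - 1 / 10 ^ 5) * n ^ 3 ≤
        x ^ 3 + x ^ 2 * y + x * y ^ 2 + y ^ 3 - 6 * (x ^ 2 + x * y + y ^ 2) ∧
      x ^ 3 + x ^ 2 * y + x * y ^ 2 + y ^ 3 - 6 * (x ^ 2 + x * y + y ^ 2) + 17 * (x + y) ≤
        (4 + 1 / 10 ^ 5) * n ^ 3 := by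
  have hy₀ : 0 ≤ y := by linarith
  have hx₀ : 0 ≤ x := hy₀.trans hyx
  have hyn : y ≤ n := hyx.trans hxn
  have hn₂ : 10 ^ 20 * n ^ 2 ≤ n * n ^ 2 := mul_le_mul_of_nonneg_right hn (by positivity)
  have hn₁ : n ≤ n ^ 2 := le_self_pow₀ (by linarith) (by norm_num)
  have hy₃ : (1 - 1 / 10 ^ 6) * n ^ 3 ≤ y ^ 3 := by
    calc (1 - 1 / 10 ^ 6) * n ^ 3 ≤ ((1 - 1 / 10 ^ 8) * n) ^ 3 := by
          rw [mul_pow]; gcongr; norm_num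
      _ ≤ y ^ 3 := by gcongr
  have hlower : y ^ 2 * y ≤ x ^ 2 * y ∧ y * y ^ 2 ≤ x * y ^ 2 ∧ y ^ 3 ≤ x ^ 3 :=
    ⟨by gcongr, by gcongr, by gcongr⟩
  have hupper : x ^ 2 * y ≤ n ^ 2 * n ∧ x * y ^ 2 ≤ n * n ^ 2 ∧ x ^ 3 ≤ n ^ 3 ∧ y ^ 3 ≤ n ^ 3 :=
    ⟨by gcongr, by gcongr, by gcongr, by gcongr⟩
  have hsq : x ^ 2 ≤ n ^ 2 ∧ x * y ≤ n * n ∧ y ^ 2 ≤ n ^ 2 := ⟨by gcongr, by gcongr, by gcongr⟩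
  have : 0 ≤ x ^ 2 + x * y + y ^ 2 := by positivity
  have : 0 ≤ n ^ 3 := by positivity
  constructor <;> linarith

lemma le_chooseFour_sub (hn : 10 ^ 20 ≤ n) (hy : (1 - 1 / 10 ^ 8) * n ≤ y) (hyx : y ≤ x)
    (hxn : x ≤ n) : (x - y) * ((1 / 6 - 1 / 10 ^ 5) * n ^ 3) ≤ chooseFour x - chooseFour y := by
  have hslope := (slope_bounds hn hy hyx hxn).1
  have hn₃ : 0 ≤ n ^ 3 := by positivity
  rw [show chooseFour x - chooseFour y = (x - y) * ((x ^ 3 + x ^ 2 * y + x * y ^ 2 + y ^ 3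
    - 6 * (x ^ 2 + x * y + y ^ 2) + 11 * (x + y) - 6) / 24) by rw [chooseFour, chooseFour]; ring]
  exact mul_le_mul_of_nonneg_left (by linarith) (by linarith)

lemma oddBound_sub_eq (x y : ℝ) : oddBound x - oddBound y =
    (x - y) * ((x ^ 3 + x ^ 2 * y + x * y ^ 2 + y ^ 3
      - 6 * (x ^ 2 + x * y + y ^ 2) + 17 * (x + y) - 24) / 48) := by
  rw [oddBound, oddBound]; ring

lemma oddBound_sub_le (hn : 10 ^ 20 ≤ n) (hy : (1 - 1 / 10 ^ 8) * n ≤ y) (hyx : y ≤ x)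
    (hxn : x ≤ n) : oddBound x - oddBound y ≤ (x - y) * ((1 / 12 + 1 / 10 ^ 5) * n ^ 3) := by
  have hslope := (slope_bounds hn hy hyx hxn).2
  have hn₃ : 0 ≤ n ^ 3 := by positivity
  rw [oddBound_sub_eq]
  exact mul_le_mul_of_nonneg_left (by linarith) (by linarith)

lemma le_oddBound_sub (hn : 10 ^ 20 ≤ n) (hy : (1 - 1 / 10 ^ 8) * n ≤ y) (hyx : y ≤ x)
    (hxn : x ≤ n) : (x - y) * ((1 / 12 - 1 / 10 ^ 5) * n ^ 3) ≤ oddBound x - oddBound y := by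
  have hslope := (slope_bounds hn hy hyx hxn).1
  have hn₃ : 0 ≤ n ^ 3 := by positivity
  rw [oddBound_sub_eq]
  exact mul_le_mul_of_nonneg_left (by linarith) (by linarith)

lemma le_chooseFour_sub_add_oddBound_sub_sq {t : ℝ} (hn : 10 ^ 20 ≤ n) (ht₀ : 0 ≤ t)
    (ht : t ≤ 1 / 10 ^ 20 * n) : (1 / 48 - 1 / 10 ^ 19) * n ^ 4 ≤
      chooseFour n - chooseFour (n - t) + oddBound (n - t) - (n - t) ^ 2 := by
  have hy : (1 - 1 / 10 ^ 8) * n ≤ n - t := by linarith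
  have hclique := le_chooseFour_sub hn hy (by linarith) le_rfl
  have hodd := oddBound_sub_le hn hy (by linarith) le_rfl
  rw [sub_sub_cancel] at hclique hodd
  have hn₃ : 0 ≤ n ^ 3 := by positivity
  have hgain : 0 ≤ t * ((1 / 6 - 1 / 10 ^ 5) * n ^ 3) := by positivity
  have hloss : t * ((1 / 12 + 1 / 10 ^ 5) * n ^ 3) ≤
      1 / 10 ^ 20 * n * ((1 / 12 + 1 / 10 ^ 5) * n ^ 3) :=
    mul_le_mul_of_nonneg_right ht (by positivity)
  have hsq : (n - t) ^ 2 ≤ n ^ 2 := pow_le_pow_left₀ (by linarith) (by linarith) 2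
  have hcube : 10 ^ 20 * n ^ 3 ≤ n * n ^ 3 := mul_le_mul_of_nonneg_right hn hn₃
  have : 0 ≤ n * n ^ 3 := by positivity
  linarith [pow_four_sub_le_oddBound_sub_sq (x := n) (by linarith)]

-- Trading one of the `t` clique vertices for up to seven deleted ones loses `n ^ 3 / 12` edges and
-- regains at most `7 * n ^ 3 / 1000`.
lemma add_mul_add_oddBound_lt {s t w : ℝ} (hn : 10 ^ 20 ≤ n) (hs : 0 ≤ s)
    (ht : t ≤ 1 / 10 ^ 20 * n) (hst : s + 1 ≤ t) (hw₀ : 0 ≤ w) (hw : w ≤ 7 * (t - s)) :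
    w * ((1 / 12 + 1 / 1000) * n ^ 3) + oddBound (n - s - w) <
      chooseFour (n - s) - chooseFour (n - t) + oddBound (n - t) - (n - t) ^ 2 := by
  have hy : (1 - 1 / 10 ^ 8) * n ≤ n - t := by linarith
  have hz : (1 - 1 / 10 ^ 8) * n ≤ n - s - w := by linarith
  have hclique := le_chooseFour_sub hn hy (show n - t ≤ n - s by linarith) (by linarith)
  have hodd := oddBound_sub_le hn hy (show n - t ≤ n - s by linarith) (by linarith)
  have hdel := le_oddBound_sub hn hz (show n - s - w ≤ n - s by linarith) (by linarith)
  rw [sub_sub_sub_cancel_left] at hclique hodd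
  rw [sub_sub_cancel] at hdel
  have : 0 < n := by linarith
  have hn₃ : 0 < n ^ 3 := by positivity
  have hsq : (n - t) ^ 2 ≤ n ^ 2 := pow_le_pow_left₀ (by linarith) (by linarith) 2
  have hcube : 10 ^ 20 * n ^ 2 ≤ n * n ^ 2 := mul_le_mul_of_nonneg_right hn (by positivity)
  have hts : 1 * n ^ 3 ≤ (t - s) * n ^ 3 := mul_le_mul_of_nonneg_right (by linarith) hn₃.le
  have hwts : w * n ^ 3 ≤ 7 * (t - s) * n ^ 3 := mul_le_mul_of_nonneg_right hw hn₃.le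
  linarith

end Estimates

variable {α : Type*} [DecidableEq α] {V L A : Finset α} {E : Finset (Finset α)} {r t : ℕ}

/-- The `r`-subsets of `V` meeting `L`. -/
def meetingSets (r : ℕ) (V L : Finset α) : Finset (Finset α) :=
  {q ∈ powersetCard r V | ¬ Disjoint q L}

lemma meetingSets_subset : meetingSets r V L ⊆ powersetCard r V := filter_subset _ _

/-- The edge set of the join of the complete `4`-graph on `L` with the odd construction on `V \ L`
whose first part is `A`. -/
def cliqueJoinOdd (V L A : Finset α) : Finset (Finset α) :=
  meetingSets 4 V L ∪ oddSets 4 (V \ L) A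

lemma cliqueJoinOdd_subset : cliqueJoinOdd V L A ⊆ powersetCard 4 V :=
  union_subset meetingSets_subset (oddSets_subset.trans (powersetCard_mono sdiff_subset))

lemma card_meetingSets_add (hL : L ⊆ V) :
    #(meetingSets r V L) + (#V - #L).choose r = (#V).choose r := by
  have hmiss : {q ∈ powersetCard r V | ¬ ¬ Disjoint q L} = powersetCard r (V \ L) := by
    ext q
    simp only [not_not, mem_filter, mem_powersetCard, subset_sdiff]
    tauto
  rw [← card_sdiff_of_subset hL, ← card_powersetCard, ← hmiss, ← card_powersetCard]
  exact card_filter_add_card_filter_not _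

lemma cast_card_meetingSets_four (hL : L ⊆ V) :
    (#(meetingSets 4 V L) : ℝ) = chooseFour #V - chooseFour (#V - #L) := by
  rw [← Nat.cast_sub (card_le_card hL), ← cast_choose_four, ← cast_choose_four, eq_sub_iff_add_eq]
  exact_mod_cast card_meetingSets_add hL

lemma card_cliqueJoinOdd :
    #(cliqueJoinOdd V L A) = #(meetingSets 4 V L) + #(oddSets 4 (V \ L) A) := by
  refine card_union_of_disjoint (disjoint_left.2 fun q hq hq' => (mem_filter.1 hq).2 ?_)
  exact (subset_sdiff.1 (mem_powersetCard.1 (oddSets_subset hq')).1).2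

lemma subset_meetingSets_union_restrict (hE : E ⊆ powersetCard r V) (L : Finset α) :
    E ⊆ meetingSets r V L ∪ restrict E (V \ L) := by
  intro f hf
  by_cases hfL : Disjoint f L
  · exact mem_union_right _
      (mem_filter.2 ⟨hf, subset_sdiff.2 ⟨(mem_powersetCard.1 (hE hf)).1, hfL⟩⟩)
  · exact mem_union_left _ (mem_filter.2 ⟨hE hf, hfL⟩)

lemma le_card_of_forall_card_cliqueJoinOdd_le (ht : t < #V)
    (hmax : ∀ L ⊆ V, #L = t → ∀ A ⊆ V \ L, #(cliqueJoinOdd V L A) ≤ #E) :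
    chooseFour #V - chooseFour (#V - t) + oddBound (#V - t) - ((#V : ℝ) - t) ^ 2 ≤ #E := by
  obtain ⟨L, hL, hLt⟩ := exists_subset_card_eq ht.le
  have hne : (V \ L).Nonempty := card_pos.1 (by rw [card_sdiff_of_subset hL]; omega)
  obtain ⟨A, hA, -, hodd⟩ := exists_oddBound_sub_sq_le hne
  have hle : (#(meetingSets 4 V L) : ℝ) + #(oddSets 4 (V \ L) A) ≤ #E :=
    mod_cast card_cliqueJoinOdd.symm.trans_le (hmax L hL hLt A hA)
  rw [cast_card_meetingSets_four hL, hLt] at hle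
  rw [cast_card_sdiff hL, hLt] at hodd
  linarith

lemma card_heavyVerts_le (hE : E ⊆ powersetCard 4 V) (hV : (10 : ℝ) ^ 20 ≤ #V)
    (hcard : (1 / 48 - 1 / 10 ^ 19) * (#V : ℝ) ^ 4 ≤ #E) (ht : (t : ℝ) ≤ 1 / 10 ^ 20 * #V)
    (hM : ¬ HasDependentMatching E V (t + 1)) : #(heavyVerts E V) ≤ t := by
  by_contra! hlt
  obtain ⟨R, hR, hRt⟩ := exists_subset_card_eq (Nat.succ_le_of_lt hlt)
  refine hM ?_
  rw [Nat.succ_eq_add_one] at hRt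
  rw [← hRt, ← zero_add #R]
  exact (hasDependentMatching_zero E _).add_card_of_subset_heavyVerts hE hV hcard ht hR
    (by omega)

lemma exists_cover_sdiff_heavyVerts (hE : E ⊆ powersetCard 4 V) (hV : (10 : ℝ) ^ 20 ≤ #V)
    (hcard : (1 / 48 - 1 / 10 ^ 19) * (#V : ℝ) ^ 4 ≤ #E) (ht : (t : ℝ) ≤ 1 / 10 ^ 20 * #V)
    (hM : ¬ HasDependentMatching E V (t + 1)) :
    ∃ W ⊆ V \ heavyVerts E V, #W ≤ 7 * (t - #(heavyVerts E V)) ∧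
      HasIndepNbhds (restrict E ((V \ heavyVerts E V) \ W)) := by
  have hle := card_heavyVerts_le hE hV hcard ht hM
  refine exists_cover_of_not_hasDependentMatching (fun f hf => (mem_powersetCard.1 (hE hf)).2)
    _ _ fun h => hM ?_
  have := h.add_card_of_subset_heavyVerts hE hV hcard ht Subset.rfl (by omega)
  rwa [show t - #(heavyVerts E V) + 1 + #(heavyVerts E V) = t + 1 by omega] at this

lemma card_le_of_subset_sdiff_heavyVerts (hE : E ⊆ powersetCard 4 V) {W : Finset α}
    (hW : W ⊆ V \ heavyVerts E V) :
    (#E : ℝ) ≤ #(meetingSets 4 V (heavyVerts E V)) +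
      #W * ((1 / 12 + 1 / 1000) * (#V : ℝ) ^ 3) +
      #(restrict E ((V \ heavyVerts E V) \ W)) := by
  set L := heavyVerts E V
  have hsplit : #E ≤ #(meetingSets 4 V L) + #(restrict E (V \ L)) :=
    (card_le_card (subset_meetingSets_union_restrict hE L)).trans (card_union_le _ _)
  have hdel := card_le_card_restrict_sdiff_add_sum_degree
    (restrict_subset_powersetCard hE (V \ L)) W
  rw [restrict_restrict sdiff_subset] at hdel
  have hlight : ∑ x ∈ W, (degree (restrict E (V \ L)) x : ℝ) ≤
      #W * ((1 / 12 + 1 / 1000) * (#V : ℝ) ^ 3) := by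
    rw [← nsmul_eq_mul]
    refine sum_le_card_nsmul _ _ _ fun x hx => ?_
    obtain ⟨hxV, hxL⟩ := Finset.mem_sdiff.1 (hW hx)
    refine (Nat.cast_le.2 (degree_mono (restrict_subset E _) x)).trans (le_of_not_gt fun hlt => ?_)
    exact hxL (mem_filter.2 ⟨hxV, hlt⟩)
  have hsplit : (#E : ℝ) ≤ #(meetingSets 4 V L) + #(restrict E (V \ L)) := mod_cast hsplit
  have hdel : (#(restrict E (V \ L)) : ℝ) ≤ #(restrict E ((V \ L) \ W)) +
      ∑ x ∈ W, (degree (restrict E (V \ L)) x : ℝ) := mod_cast hdel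
  linarith

lemma card_heavyVerts_eq (hE : E ⊆ powersetCard 4 V) (hV : (10 : ℝ) ^ 20 ≤ #V)
    (hcard : chooseFour #V - chooseFour (#V - t) + oddBound (#V - t) - ((#V : ℝ) - t) ^ 2 ≤ #E)
    (ht : (t : ℝ) ≤ 1 / 10 ^ 20 * #V) (hM : ¬ HasDependentMatching E V (t + 1)) :
    #(heavyVerts E V) = t := by
  have hcard' := (le_chooseFour_sub_add_oddBound_sub_sq hV (Nat.cast_nonneg t) ht).trans hcard
  have hle := card_heavyVerts_le hE hV hcard' ht hM
  by_contra hne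
  obtain ⟨W, hW, hWt, hI⟩ := exists_cover_sdiff_heavyVerts hE hV hcard' ht hM
  have hbound := card_le_of_subset_sdiff_heavyVerts hE hW
  set L := heavyVerts E V with hL
  have hLV : L ⊆ V := filter_subset _ _
  have hlt : (#L : ℝ) + 1 ≤ t := mod_cast Nat.succ_le_of_lt (lt_of_le_of_ne hle hne)
  have hWt : (#W : ℝ) ≤ 7 * (t - #L) := by
    rw [← Nat.cast_sub hle]
    exact_mod_cast hWt
  have hrest : (#((V \ L) \ W) : ℝ) = #V - #L - #W := by
    rw [cast_card_sdiff hW, cast_card_sdiff hLV]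
  have hL₀ : (0 : ℝ) ≤ #L := Nat.cast_nonneg _
  have hodd := hI.card_le_oddBound (restrict_subset_powersetCard hE _)
    (by rw [hrest]; linarith)
  rw [hrest] at hodd
  rw [cast_card_meetingSets_four hLV] at hbound
  linarith [add_mul_add_oddBound_lt hV hL₀ ht hlt (Nat.cast_nonneg _) hWt]

theorem exists_eq_cliqueJoinOdd (hE : E ⊆ powersetCard 4 V) (hV : (10 : ℝ) ^ 20 ≤ #V)
    (ht : (t : ℝ) ≤ 1 / 10 ^ 20 * #V) (hM : ¬ HasDependentMatching E V (t + 1))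
    (hmax : ∀ L ⊆ V, #L = t → ∀ A ⊆ V \ L, #(cliqueJoinOdd V L A) ≤ #E) :
    ∃ L ⊆ V, #L = t ∧ ∃ A ⊆ V \ L, E = cliqueJoinOdd V L A := by
  have htV : t < #V := by exact_mod_cast (by linarith : (t : ℝ) < #V)
  have hcard := le_card_of_forall_card_cliqueJoinOdd_le htV hmax
  have hLt := card_heavyVerts_eq hE hV hcard ht hM
  obtain ⟨W, -, hWt, hI⟩ := exists_cover_sdiff_heavyVerts hE hV
    ((le_chooseFour_sub_add_oddBound_sub_sq hV (Nat.cast_nonneg t) ht).trans hcard) ht hM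
  set L := heavyVerts E V with hL
  have hLV : L ⊆ V := filter_subset _ _
  obtain rfl : W = ∅ := card_eq_zero.1 (by rw [hLt] at hWt; omega)
  rw [sdiff_empty] at hI
  obtain ⟨A, hA, hodd⟩ := hI.exists_card_lt_or_eq_oddSets
    (restrict_subset_powersetCard hE (V \ L)) (by rw [cast_card_sdiff hLV, hLt]; linarith)
  have hAcard := hmax L hLV hLt A hA
  have hsub := subset_meetingSets_union_restrict hE L
  refine ⟨L, hLV, hLt, A, hA, ?_⟩
  rcases hodd with hlt | heq
  · rw [card_cliqueJoinOdd] at hAcard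
    have := (card_le_card hsub).trans (card_union_le _ _)
    omega
  · rw [heq] at hsub
    exact eq_of_subset_of_card_le hsub hAcard

end Join

section Recolouring

open Finset

variable {α β : Type*} [DecidableEq β]

lemma exists_eqOn_image_eq {S S' : Finset α} {T : Finset β} (f : α → β) (hS : Disjoint S S')
    (hcard : #S' = #T) : ∃ g : α → β, Set.EqOn g f S ∧ S'.image g = T := by
  classical
  let e := equivOfCardEq hcard
  refine ⟨fun x => if hx : x ∈ S' then e ⟨x, hx⟩ else f x,
    fun x hx => dif_neg (disjoint_left.1 hS hx), ?_⟩
  ext y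
  simp only [mem_image]
  constructor
  · rintro ⟨x, hx, rfl⟩
    rw [dif_pos hx]
    exact (e ⟨x, hx⟩).2
  · intro hy
    refine ⟨e.symm ⟨y, hy⟩, (e.symm ⟨y, hy⟩).2, ?_⟩
    rw [dif_pos (e.symm ⟨y, hy⟩).2, Subtype.coe_eta, e.apply_symm_apply]

variable [DecidableEq α] {V L A q : Finset α}

lemma not_hasDependentMatching_cliqueJoinOdd :
    ¬ HasDependentMatching (cliqueJoinOdd V L A) V (#L + 1) := by
  rintro ⟨S, hS, hdisj⟩
  have hmeet : ∀ i, ∃ x ∈ L, x ∈ S i := by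
    intro i
    by_contra! hLS
    refine (hS i).2.2 ((hasIndepNbhds_oddSets (V \ L) A).mono fun f hf => ?_)
    obtain ⟨hf, hfS⟩ := mem_filter.1 hf
    refine (mem_union.1 hf).resolve_left fun hfL => (mem_filter.1 hfL).2 ?_
    exact disjoint_right.2 fun x hxL hxf => hLS x hxL (hfS hxf)
  choose g hgL hgS using hmeet
  have hg : Function.Injective g := fun i j hij => by
    by_contra hne
    exact disjoint_left.1 (hdisj hne) (hgS i) (hij ▸ hgS j)
  have := card_le_card_of_injOn g (s := univ) (fun i _ => hgL i) hg.injOn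
  rw [card_univ, Fintype.card_fin] at this
  omega

lemma exists_le_two_mul_card_oddSets_eq (hA : A ⊆ V) :
    ∃ A' ⊆ V, #V ≤ 2 * #A' ∧ oddSets 4 V A' = oddSets 4 V A := by
  by_cases hcard : #V ≤ 2 * #A
  · exact ⟨A, hA, hcard, rfl⟩
  · refine ⟨V \ A, sdiff_subset, ?_, oddSets_four_sdiff V A⟩
    rw [card_sdiff_of_subset hA]
    omega

lemma sq_two_mul_card_sub_le (hV : 3 ≤ #V) (hA : A ⊆ V)
    (hmax : ∀ B ⊆ V, #(oddSets 4 V B) ≤ #(oddSets 4 V A)) :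
    (2 * #A - #V : ℝ) ^ 2 ≤ 10 * #V - 4 := by
  obtain ⟨B, hB, -, hcard⟩ := exists_oddBound_sub_sq_le (card_pos.1 (by omega : 0 < #V))
  have hBA : (#(oddSets 4 V B) : ℝ) ≤ #(oddSets 4 V A) := by exact_mod_cast hmax B hB
  rw [card_oddSets_four_eq_oddBound_sub hA, cast_card_sdiff hA] at hBA
  have hV : (3 : ℝ) ≤ #V := by exact_mod_cast hV
  have hsq : ((2 * #A - #V : ℝ) ^ 2 - 3 * #V + 4) ^ 2 ≤ (7 * #V) ^ 2 := by nlinarith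
  linarith [(abs_le.1 (abs_le_of_sq_le_sq hsq (by linarith))).2]

lemma cast_card_sub_half_le_sqrt (hV : 3 ≤ #V) (hA : A ⊆ V) (hcard : #V ≤ 2 * #A)
    (hmax : ∀ B ⊆ V, #(oddSets 4 V B) ≤ #(oddSets 4 V A)) :
    ((#A - #V / 2 : ℕ) : ℝ) ≤ √(4 * #V) := by
  refine Real.le_sqrt_of_sq_le ?_
  have hd := sq_two_mul_card_sub_le hV hA hmax
  have hm : 2 * ((#A - #V / 2 : ℕ) : ℝ) + #V ≤ 2 * #A + 1 := by
    exact_mod_cast (by omega : 2 * (#A - #V / 2) + #V ≤ 2 * #A + 1)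
  have hmd : (2 * ((#A - #V / 2 : ℕ) : ℝ)) ^ 2 ≤ (2 * #A - #V + 1) ^ 2 := by
    gcongr
    linarith
  nlinarith [sq_nonneg (2 * #A - #V - 10 : ℝ)]

lemma exists_injOn_image_eq [Nonempty β] {V' L' A' : Finset β} (hL : L ⊆ V) (hA : A ⊆ V \ L)
    (hL' : L' ⊆ V') (hA' : A' ⊆ V' \ L') (hVcard : #V = #V') (hLcard : #L = #L')
    (hAcard : #A = #A') :
    ∃ f : α → β, Set.InjOn f V ∧ V.image f = V' ∧ L.image f = L' ∧ A.image f = A' := by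
  obtain ⟨f, -, hf⟩ := exists_eqOn_image_eq (fun _ => Classical.arbitrary β)
    (disjoint_empty_left L) hLcard
  obtain ⟨g, hgf, hg⟩ := exists_eqOn_image_eq f (subset_sdiff.1 hA).2.symm hAcard
  have hdisj : Disjoint (L ∪ A) ((V \ L) \ A) :=
    disjoint_union_left.2 ⟨disjoint_sdiff.mono_right sdiff_subset, disjoint_sdiff⟩
  obtain ⟨h, hhg, hh⟩ := exists_eqOn_image_eq (T := (V' \ L') \ A') g hdisj
    (by simp only [card_sdiff_of_subset, hL, hL', hA, hA', hVcard, hLcard, hAcard])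
  rw [coe_union] at hhg
  have hhL : L.image h = L' := by
    rw [image_congr (hhg.mono Set.subset_union_left), image_congr hgf, hf]
  have hhA : A.image h = A' := by rw [image_congr (hhg.mono Set.subset_union_right), hg]
  have hhV : V.image h = V' := by
    rw [← union_sdiff_of_subset hL, ← union_sdiff_of_subset hA, image_union, image_union, hhL, hhA,
      hh, union_sdiff_of_subset hA', union_sdiff_of_subset hL']
  exact ⟨h, card_image_iff.1 (by rw [hhV, hVcard]), hhV, hhL, hhA⟩

lemma image_mem_cliqueJoinOdd_iff {f : α → β} (hf : Set.InjOn f V) (hL : L ⊆ V) (hA : A ⊆ V)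
    (hq : q ∈ powersetCard 4 V) :
    q.image f ∈ cliqueJoinOdd (V.image f) (L.image f) (A.image f) ↔ q ∈ cliqueJoinOdd V L A := by
  obtain ⟨hqV, hq₄⟩ := mem_powersetCard.1 hq
  have card_inter : ∀ X ⊆ V, #(q.image f ∩ X.image f) = #(q ∩ X) := fun X hX => by
    rw [← image_inter_of_injOn q X (hf.mono (by exact_mod_cast union_subset hqV hX)),
      card_image_of_injOn (hf.mono (by exact_mod_cast inter_subset_left.trans hqV))]
  have hdisj : Disjoint (q.image f) (L.image f) ↔ Disjoint q L := by
    rw [disjoint_iff_inter_eq_empty, disjoint_iff_inter_eq_empty, ← card_eq_zero, ← card_eq_zero,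
      card_inter L hL]
  simp only [cliqueJoinOdd, meetingSets, oddSets, mem_union, mem_filter, mem_powersetCard,
    subset_sdiff, hdisj, card_inter A hA, image_subset_image hqV, hqV,
    card_image_of_injOn (hf.mono (by exact_mod_cast hqV)), hq₄, true_and, and_true]

end Recolouring

section Translation

open Finset

variable {r n t k : ℕ} {F : HGraph r} {H : HGraph 4} {V L A : Finset ℕ}

lemma HGraph.edges_subset_powersetCard (H : HGraph r) : H.edges ⊆ powersetCard r H.verts :=
  fun e he => mem_powersetCard.2 ⟨H.edges_sub e he, H.edges_card e he⟩

lemma HGraph.ofEdges_edges {E : Finset (Finset ℕ)} (hE : E ⊆ powersetCard r V) :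
    (HGraph.ofEdges r V E).edges = E :=
  filter_true_of_mem fun _ he => mem_powersetCard.1 (hE he)

lemma HGraph.induce_edges (H : HGraph r) (S : Finset ℕ) :
    (H.induce S).edges = restrict H.edges S :=
  HGraph.ofEdges_edges fun _ he => by
    obtain ⟨heH, heS⟩ := mem_filter.1 he
    exact mem_powersetCard.2 ⟨subset_inter (H.edges_sub _ heH) heS, H.edges_card _ heH⟩

lemma card_edges_le_exMatchN {H : HGraph r} (hH : ¬ F.HasMatching H (t + 1)) :
    #H.edges ≤ exMatchN r #H.verts t F := by
  refine le_csSup ⟨(#H.verts).choose r, ?_⟩ ⟨H, rfl, hH, rfl⟩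
  rintro _ ⟨G, hG, -, rfl⟩
  rw [← hG, ← card_powersetCard]
  exact card_le_card G.edges_subset_powersetCard

lemma F43_verts : F43.verts = {1, 2, 3, 4, 5, 6, 7} := by decide

lemma F43_edges :
    F43.edges = {{4, 1, 2, 3}, {5, 1, 2, 3}, {6, 1, 2, 3}, {7, 1, 2, 3}, {4, 5, 6, 7}} := by
  decide

lemma not_hasIndepNbhds_of_isCopyIn (h : F43.IsCopyIn H) : ¬ HasIndepNbhds H.edges := by
  obtain ⟨f, hf, -, hedges⟩ := h
  simp only [F43_edges, mem_insert, mem_singleton, forall_eq_or_imp, forall_eq, image_insert,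
    image_singleton] at hedges
  obtain ⟨h₄, h₅, h₆, h₇, hlast⟩ := hedges
  have hT : #{f 1, f 2, f 3} = 3 := by
    have hinj : Set.InjOn f ({1, 2, 3} : Finset ℕ) := hf.mono (coe_subset.2 (by decide))
    have := card_image_of_injOn hinj
    rwa [image_insert, image_insert, image_singleton] at this
  intro hI
  obtain ⟨w, hw, hwT⟩ := hI _ _ hT hlast
  simp only [mem_insert, mem_singleton] at hw
  rcases hw with rfl | rfl | rfl | rfl <;> exact hwT ‹_›

lemma isCopyIn_of_not_hasIndepNbhds (h : ¬ HasIndepNbhds H.edges) : F43.IsCopyIn H := by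
  obtain ⟨T, g, hT, hg, hdisj, hw⟩ := exists_disjoint_of_not_hasIndepNbhds H.edges_card h
  have hg₄ := H.edges_card g hg
  obtain ⟨a, b, c, -, -, -, rfl⟩ := card_eq_three.1 hT
  obtain ⟨p, q, r, s, -, -, -, -, -, -, rfl⟩ := card_eq_four.1 hg₄
  simp only [mem_insert, mem_singleton, forall_eq_or_imp, forall_eq] at hw
  let f : ℕ → ℕ
    | 1 => a | 2 => b | 3 => c | 4 => p | 5 => q | 6 => r | _ => s
  have himage : F43.verts.image f = {a, b, c} ∪ {p, q, r, s} := by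
    simp only [F43_verts, image_insert, image_singleton, insert_union, singleton_union, f]
  have hinj : Set.InjOn f F43.verts := card_image_iff.1 <| by
    rw [himage, card_union_of_disjoint hdisj, hT, hg₄, F43_verts]
    rfl
  have hedges : ∀ e ∈ F43.edges, e.image f ∈ H.edges := by
    simp only [F43_edges, mem_insert, mem_singleton, forall_eq_or_imp, forall_eq, image_insert,
      image_singleton]
    exact ⟨hw.1, hw.2.1, hw.2.2.1, hw.2.2.2, hg⟩
  refine ⟨f, hinj, fun v hv => ?_, hedges⟩
  obtain ⟨e, he, hve⟩ : ∃ e ∈ F43.edges, v ∈ e := by revert v; decide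
  exact H.edges_sub _ (hedges e he) (mem_image_of_mem f hve)

lemma hasMatching_F43_iff : F43.HasMatching H k ↔ HasDependentMatching H.edges H.verts k := by
  have isCopyIn_iff : ∀ S, F43.IsCopyIn (H.induce S) ↔ ¬ HasIndepNbhds (restrict H.edges S) :=
    fun S => by
      rw [← H.induce_edges]
      exact ⟨not_hasIndepNbhds_of_isCopyIn, isCopyIn_of_not_hasIndepNbhds⟩
  have hcard : #F43.verts = 7 := rfl
  simp only [HGraph.HasMatching, HasDependentMatching, isCopyIn_iff, hcard]
  exact ⟨fun ⟨S, hS, hdisj, hcopy⟩ => ⟨S, fun i => ⟨(hS i).1, (hS i).2, hcopy i⟩, hdisj⟩,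
    fun ⟨S, hS, hdisj⟩ => ⟨S, fun i => ⟨(hS i).1, (hS i).2.1⟩, hdisj, fun i => (hS i).2.2⟩⟩

lemma IsExtremalMatchingFree.exists_edges_eq_cliqueJoinOdd
    (hH : IsExtremalMatchingFree 4 n t F43 H) (hn : (10 : ℝ) ^ 20 ≤ n)
    (ht : (t : ℝ) ≤ 1 / 10 ^ 20 * n) :
    ∃ L ⊆ H.verts, #L = t ∧ ∃ A ⊆ H.verts \ L, H.edges = cliqueJoinOdd H.verts L A ∧
      ∀ B ⊆ H.verts \ L, #(oddSets 4 (H.verts \ L) B) ≤ #(oddSets 4 (H.verts \ L) A) := by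
  obtain ⟨rfl, hfree, hcard⟩ := hH
  have hmax : ∀ L ⊆ H.verts, #L = t → ∀ A ⊆ H.verts \ L,
      #(cliqueJoinOdd H.verts L A) ≤ #H.edges := by
    rintro L - rfl A -
    have hedges := HGraph.ofEdges_edges (cliqueJoinOdd_subset (V := H.verts) (L := L) (A := A))
    rw [hcard, ← hedges]
    refine card_edges_le_exMatchN (H := .ofEdges 4 H.verts _) ?_
    rw [hasMatching_F43_iff, hedges]
    exact not_hasDependentMatching_cliqueJoinOdd
  rw [hasMatching_F43_iff] at hfree
  obtain ⟨L, hL, hLt, A, hA, hE⟩ :=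
    exists_eq_cliqueJoinOdd H.edges_subset_powersetCard hn ht hfree hmax
  refine ⟨L, hL, hLt, A, hA, hE, fun B hB => ?_⟩
  have := hmax L hL hLt B hB
  rw [hE, card_cliqueJoinOdd, card_cliqueJoinOdd] at this
  omega

lemma range_union_Ico_union_Ico (htk : t ≤ k) (hkn : k ≤ n) :
    range t ∪ (Ico t k ∪ Ico k n) = range n := by
  rw [Ico_union_Ico_eq_Ico htk hkn, range_eq_Ico, Ico_union_Ico_eq_Ico t.zero_le (htk.trans hkn),
    range_eq_Ico]

lemma join_completeOn_edges {r : ℕ} (hr : 0 < r) (L : Finset ℕ) (G : HGraph r) :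
    ((completeOn r L).join G).edges = meetingSets r (L ∪ G.verts) L ∪ G.edges := by
  have hcomplete : (completeOn r L).edges = powersetCard r L := HGraph.ofEdges_edges Subset.rfl
  have hG : G.edges ⊆ powersetCard r (L ∪ G.verts) :=
    G.edges_subset_powersetCard.trans (powersetCard_mono subset_union_right)
  have hL : powersetCard r L ⊆ meetingSets r (L ∪ G.verts) L := fun q hq => by
    refine mem_filter.2 ⟨powersetCard_mono subset_union_left hq, fun hdisj => ?_⟩
    obtain ⟨hqL, hqr⟩ := mem_powersetCard.1 hq
    rw [← inter_eq_left.2 hqL, disjoint_iff_inter_eq_empty.1 hdisj, card_empty] at hqr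
    exact hr.ne hqr
  have hverts : ∀ q ∈ powersetCard r (L ∪ G.verts), ¬ q ⊆ L → (q ∩ G.verts).Nonempty := by
    intro q hq hqL
    obtain ⟨x, hxq, hxL⟩ := not_subset.1 hqL
    have := (mem_powersetCard.1 hq).1 hxq
    exact ⟨x, by grind⟩
  have hunion : powersetCard r L ∪ G.edges ∪ {e ∈ powersetCard r (L ∪ G.verts) |
      (e ∩ L).Nonempty ∧ (e ∩ G.verts).Nonempty} = meetingSets r (L ∪ G.verts) L ∪ G.edges := by
    ext q
    simp only [meetingSets, mem_union, mem_filter, not_disjoint_iff_nonempty_inter] at hL ⊢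
    grind
  have hjoin := HGraph.ofEdges_edges (union_subset (meetingSets_subset (L := L)) hG)
  rw [← hjoin, ← hunion, ← hcomplete]
  rfl

lemma oddCross_edges (r : ℕ) (V₁ V₂ : Finset ℕ) :
    (oddCross r V₁ V₂).edges = oddSets r (V₁ ∪ V₂) V₁ :=
  HGraph.ofEdges_edges (filter_subset _ _)

lemma join_completeOn_oddCross_edges (htk : t ≤ k) (hkn : k ≤ n) :
    ((completeOn 4 (range t)).join (oddCross 4 (Ico t k) (Ico k n))).edges =
      cliqueJoinOdd (range n) (range t) (Ico t k) := by
  have hsdiff : range n \ range t = Ico t k ∪ Ico k n := by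
    rw [Ico_union_Ico_eq_Ico htk hkn]
    grind
  rw [join_completeOn_edges (by norm_num), oddCross_edges, cliqueJoinOdd, hsdiff]
  exact congrArg (meetingSets 4 · (range t) ∪ _) (range_union_Ico_union_Ico htk hkn)

lemma iso_of_edges_eq_cliqueJoinOdd (hL : L ⊆ H.verts) (hA : A ⊆ H.verts \ L)
    (hE : H.edges = cliqueJoinOdd H.verts L A) :
    H.Iso ((completeOn 4 (range #L)).join
      (oddCross 4 (Ico #L (#L + #A)) (Ico (#L + #A) #H.verts))) := by
  have hcard : #L + #A ≤ #H.verts := by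
    have := card_le_card hA
    rw [card_sdiff_of_subset hL] at this
    have := card_le_card hL
    omega
  obtain ⟨f, hf, hfV, hfL, hfA⟩ := exists_injOn_image_eq (V' := range #H.verts) (L' := range #L)
    (A' := Ico #L (#L + #A)) hL hA (range_mono (by omega))
    (by grind) (card_range _).symm (card_range _).symm (by simp)
  refine ⟨f, ?_, fun q hq => ?_⟩
  · have hverts : ((completeOn 4 (range #L)).join
        (oddCross 4 (Ico #L (#L + #A)) (Ico (#L + #A) #H.verts))).verts = H.verts.image f := by
      rw [hfV]
      exact range_union_Ico_union_Ico (Nat.le_add_right _ _) hcard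
    rw [hverts, coe_image]
    exact hf.bijOn_image
  · rw [join_completeOn_oddCross_edges (Nat.le_add_right _ _) hcard, hE, ← hfV, ← hfL, ← hfA]
    exact (image_mem_cliqueJoinOdd_iff hf hL (hA.trans sdiff_subset) hq).symm

end Translation

/-- extremal constructions for `𝔽_{4,3}` are contained in joins of
a clique with the graphs `B_4^{odd}(n−t, m)`, `0 ≤ m ≤ √(4(n−t))`. -/
theorem statement_15 :
    ∃ N₀ : ℕ, ∃ c : ℝ, 0 < c ∧ ∀ n : ℕ, N₀ ≤ n → ∀ t : ℕ, (t : ℝ) ≤ c * n →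
      ∀ H : HGraph 4, IsExtremalMatchingFree 4 n t F43 H →
        ∃ m : ℕ, (m : ℝ) ≤ Real.sqrt (4 * ((n - t : ℕ) : ℝ)) ∧
          H.Iso ((completeOn 4 (Finset.range t)).join
            (oddCross 4 (Finset.Ico t (t + (n - t) / 2 + m))
              (Finset.Ico (t + (n - t) / 2 + m) n))) := by
  refine ⟨10 ^ 20, 1 / 10 ^ 20, by positivity, fun n hn₀ t ht H hH => ?_⟩
  have hn : (10 : ℝ) ^ 20 ≤ n := by exact_mod_cast hn₀
  obtain ⟨L, hL, rfl, A₀, hA₀, hE, hmax⟩ := hH.exists_edges_eq_cliqueJoinOdd hn ht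
  obtain ⟨A, hA, hAcard, hodd⟩ := exists_le_two_mul_card_oddSets_eq hA₀
  rw [cliqueJoinOdd, ← hodd] at hE
  rw [← hodd] at hmax
  obtain rfl := hH.1
  have hVL := Finset.card_sdiff_of_subset hL
  have hlarge : 3 ≤ (H.verts \ L).card := by
    have : L.card + 3 ≤ H.verts.card := by
      exact_mod_cast (by linarith : (L.card : ℝ) + 3 ≤ H.verts.card)
    omega
  refine ⟨A.card - (H.verts \ L).card / 2, ?_, ?_⟩
  · rw [← hVL]
    exact cast_card_sub_half_le_sqrt hlarge hA hAcard hmax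
  · have hpart : L.card + (H.verts \ L).card / 2 + (A.card - (H.verts \ L).card / 2) =
        L.card + A.card := by omega
    rw [← hVL, hpart]
    exact iso_of_edges_eq_cliqueJoinOdd hL hA hE

end DensityCH
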